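/- Let N ≥ 3, θ ≥ p > 1, λ, γ > 0, and set β := 2(θ+1)/(pθ−1). There exist constants ε₁ > 0 and τ ∈ (0, 1), depending only on N, p, θ, λ, γ, such that the following holds: if Ω ⊂ ℝ^N is open, (u, v) is a pair of functions in C²(Ω), positive in Ω, satisfying −Δu = λ(v+1)^p and −Δv = γ(u+1)^θ in Ω and stable, and z ∈ Ω and R₀ > 0 are such that the closed ball B_{R₀}(z) is contained in Ω and G₀ := R₀^{2β−N} ∫_{B_{R₀}(z)} (v+1)² dx ≤ ε₁, then (τR₀)^{2β−N} ∫_{B_{τR₀}(z)} (v+1)² dx ≤ G₀/2. -/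

import Mathlib

open MeasureTheory Metric Real Set

noncomputable section

/-- The Euclidean Laplacian `Δw(x) = ∑ i, ∂²w/∂xᵢ²(x)` on `ℝ^N`. -/
def lap {N : ℕ} (w : EuclideanSpace ℝ (Fin N) → ℝ) (x : EuclideanSpace ℝ (Fin N)) : ℝ :=
  ∑ i : Fin N,
    fderiv ℝ (fun y => fderiv ℝ w y (EuclideanSpace.single i 1)) x (EuclideanSpace.single i 1)

/-- `φ` is a smooth compactly supported test function with support inside `Ω`. -/
def IsTestFun {N : ℕ} (Ω : Set (EuclideanSpace ℝ (Fin N)))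
    (φ : EuclideanSpace ℝ (Fin N) → ℝ) : Prop :=
  ContDiff ℝ (⊤ : ℕ∞) φ ∧ HasCompactSupport φ ∧ tsupport φ ⊆ Ω

/-- Stability of a classical solution of `-Δu = λ(v+1)^p, -Δv = γ(u+1)^θ` in `Ω`:
`√(λγpθ) ∫_Ω (v+1)^((p-1)/2) (u+1)^((θ-1)/2) φ² ≤ ∫_Ω |∇φ|²` for all test functions. -/
def IsStable {N : ℕ} (Ω : Set (EuclideanSpace ℝ (Fin N))) (lam gam p θ : ℝ)
    (u v : EuclideanSpace ℝ (Fin N) → ℝ) : Prop :=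
  ∀ φ : EuclideanSpace ℝ (Fin N) → ℝ, IsTestFun Ω φ →
    Real.sqrt (lam * gam * p * θ) *
        ∫ x in Ω, (v x + 1) ^ ((p - 1) / 2) * (u x + 1) ^ ((θ - 1) / 2) * φ x ^ 2
      ≤ ∫ x in Ω, ‖gradient φ x‖ ^ 2

/-- `(u,v)` is a positive classical solution of `-Δu = λ(v+1)^p, -Δv = γ(u+1)^θ` in `Ω`. -/
def IsSolution {N : ℕ} (Ω : Set (EuclideanSpace ℝ (Fin N))) (lam gam p θ : ℝ)
    (u v : EuclideanSpace ℝ (Fin N) → ℝ) : Prop :=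
  ContDiffOn ℝ 2 u Ω ∧ ContDiffOn ℝ 2 v Ω ∧
  (∀ x ∈ Ω, 0 < u x) ∧ (∀ x ∈ Ω, 0 < v x) ∧
  (∀ x ∈ Ω, -lap u x = lam * (v x + 1) ^ p) ∧
  (∀ x ∈ Ω, -lap v x = gam * (u x + 1) ^ θ)

/-- The quartic polynomial `L`. -/
def Lpoly (p θ s : ℝ) : ℝ :=
  s ^ 4 - (16 * p * θ * (p + 1) / (θ + 1)) * s ^ 2
    + (16 * p * θ * (p + 1) * (p + θ + 2) / (θ + 1) ^ 2) * s
    - 16 * p * θ * (p + 1) ^ 2 / (θ + 1) ^ 2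

section
open MeasureTheory Metric Real Set Filter Topology
/-- partial derivative -/
def pd {N : ℕ} (i : Fin N) (w : EuclideanSpace ℝ (Fin N) → ℝ) (x : EuclideanSpace ℝ (Fin N)) : ℝ :=
  fderiv ℝ w x (EuclideanSpace.single i 1)

/-- squared gradient -/
def gsq {N : ℕ} (w : EuclideanSpace ℝ (Fin N) → ℝ) (x : EuclideanSpace ℝ (Fin N)) : ℝ :=
  ∑ i : Fin N, (pd i w x) ^ 2

theorem lap_eq {N : ℕ} (w : EuclideanSpace ℝ (Fin N) → ℝ) (x : EuclideanSpace ℝ (Fin N)) :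
    lap w x = ∑ i : Fin N, pd i (pd i w) x := rfl

theorem norm_gradient_sq {N : ℕ} (w : EuclideanSpace ℝ (Fin N) → ℝ) (x : EuclideanSpace ℝ (Fin N)) :
    ‖gradient w x‖ ^ 2 = gsq w x := by
  rw [EuclideanSpace.norm_sq_eq]
  unfold gsq pd
  refine Finset.sum_congr rfl fun i _ => ?_
  have : inner ℝ (gradient w x) (EuclideanSpace.single i (1:ℝ)) = fderiv ℝ w x (EuclideanSpace.single i 1) := by
    unfold gradient
    rw [InnerProductSpace.toDual_symm_apply]
  rw [← this, EuclideanSpace.inner_single_right]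
  simp

theorem norm_fderiv_sq {N : ℕ} (w : EuclideanSpace ℝ (Fin N) → ℝ) (x : EuclideanSpace ℝ (Fin N)) :
    ‖fderiv ℝ w x‖ ^ 2 = gsq w x := by
  rw [← norm_gradient_sq]; unfold gradient; rw [LinearIsometryEquiv.norm_map]

theorem gsq_nonneg {N : ℕ} (w : EuclideanSpace ℝ (Fin N) → ℝ) (x : EuclideanSpace ℝ (Fin N)) :
    0 ≤ gsq w x := Finset.sum_nonneg fun _ _ => sq_nonneg _

theorem lap_congr {N : ℕ} {f g : EuclideanSpace ℝ (Fin N) → ℝ} {x : EuclideanSpace ℝ (Fin N)}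
    (h : f =ᶠ[𝓝 x] g) : lap f x = lap g x := by
  unfold lap
  refine Finset.sum_congr rfl fun i _ => ?_
  have : (fun y => fderiv ℝ f y (EuclideanSpace.single i 1)) =ᶠ[𝓝 x]
      (fun y => fderiv ℝ g y (EuclideanSpace.single i 1)) := by
    filter_upwards [h.fderiv (𝕜 := ℝ)] with y hy
    rw [hy]
  rw [this.fderiv_eq]

theorem pd_contDiff {N : ℕ} {n : ℕ} {f : EuclideanSpace ℝ (Fin N) → ℝ} (i : Fin N)
    (hf : ContDiff ℝ (n + 1 : ℕ) f) : ContDiff ℝ n (pd i f) := by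
  unfold pd
  exact (hf.fderiv_right (m := n) (by norm_cast)).clm_apply contDiff_const

theorem pd_contDiff1 {N : ℕ} {f : EuclideanSpace ℝ (Fin N) → ℝ} (i : Fin N)
    (hf : ContDiff ℝ 2 f) : ContDiff ℝ 1 (pd i f) := pd_contDiff (n := 1) i (by exact_mod_cast hf)

theorem pd_cont {N : ℕ} {f : EuclideanSpace ℝ (Fin N) → ℝ} (i : Fin N)
    (hf : ContDiff ℝ 1 f) : Continuous (pd i f) :=
  (pd_contDiff (n := 0) i (by exact_mod_cast hf)).continuous

theorem lap_cont {N : ℕ} {f : EuclideanSpace ℝ (Fin N) → ℝ}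
    (hf : ContDiff ℝ 2 f) : Continuous (lap f) := by
  have : lap f = fun x => ∑ i, pd i (pd i f) x := by ext; rfl
  rw [this]
  exact continuous_finsetSum _ fun i _ => pd_cont i (pd_contDiff1 i hf)

theorem gsq_cont {N : ℕ} {f : EuclideanSpace ℝ (Fin N) → ℝ}
    (hf : ContDiff ℝ 1 f) : Continuous (gsq f) := by
  unfold gsq
  exact continuous_finsetSum _ fun i _ => (pd_cont i hf).pow 2

theorem pd_diffAt {N : ℕ} {f : EuclideanSpace ℝ (Fin N) → ℝ} (i : Fin N) {x : EuclideanSpace ℝ (Fin N)}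
    (hf : ContDiffAt ℝ 2 f x) : DifferentiableAt ℝ (pd i f) x := by
  unfold pd
  exact ((hf.fderiv_right (m := 1) (by norm_num)).differentiableAt (by norm_num)).clm_apply
    (differentiableAt_const _)

theorem pd_hcs {N : ℕ} {f : EuclideanSpace ℝ (Fin N) → ℝ} (i : Fin N)
    (hf : HasCompactSupport f) : HasCompactSupport (pd i f) :=
  hf.fderiv_apply (𝕜 := ℝ) _

theorem green {N : ℕ} {f g : EuclideanSpace ℝ (Fin N) → ℝ} (hf : ContDiff ℝ 2 f)
    (hg : ContDiff ℝ 1 g) (hgc : HasCompactSupport g) :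
    ∫ x, ∑ i, pd i f x * pd i g x = - ∫ x, lap f x * g x := by
  have h1 : ∀ i : Fin N, Integrable (fun x => pd i f x * pd i g x) := fun i =>
    (((pd_contDiff1 i hf).continuous.mul (pd_cont i hg))).integrable_of_hasCompactSupport
      ((pd_hcs i hgc).mul_left)
  have h2 : ∀ i : Fin N, Integrable (fun x => pd i (pd i f) x * g x) := fun i =>
    (((pd_cont i (pd_contDiff1 i hf)).mul hg.continuous)).integrable_of_hasCompactSupport
      (hgc.mul_left)
  rw [integral_finsetSum _ fun i _ => h1 i]
  have : ∀ x, lap f x * g x = ∑ i, pd i (pd i f) x * g x := fun x => by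
    rw [lap_eq, Finset.sum_mul]
  simp_rw [this]
  rw [integral_finsetSum _ fun i _ => h2 i, ← Finset.sum_neg_distrib]
  refine Finset.sum_congr rfl fun i _ => ?_
  exact integral_mul_fderiv_eq_neg_fderiv_mul_of_integrable (h2 i) (h1 i)
    ((((pd_contDiff1 i hf).continuous.mul hg.continuous)).integrable_of_hasCompactSupport hgc.mul_left)
    (fun x _ => (pd_contDiff1 i hf).differentiable (by norm_num) x)
    (fun x _ => hg.differentiable (by norm_num) x)

theorem green2 {N : ℕ} {f g : EuclideanSpace ℝ (Fin N) → ℝ} (hf : ContDiff ℝ 2 f)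
    (hg : ContDiff ℝ 2 g) (hgc : HasCompactSupport g) :
    ∫ x, lap f x * g x = ∫ x, f x * lap g x := by
  have h0 := green hf (hg.of_le (by norm_num)) hgc
  have hA : ∀ i : Fin N, Integrable (fun x => pd i f x * pd i g x) := fun i =>
    (((pd_contDiff1 i hf).continuous.mul (pd_contDiff1 i hg).continuous)).integrable_of_hasCompactSupport
      ((pd_hcs i hgc).mul_left)
  have hB : ∀ i : Fin N, Integrable (fun x => f x * pd i (pd i g) x) := fun i =>
    ((hf.continuous.mul (pd_cont i (pd_contDiff1 i hg)))).integrable_of_hasCompactSupport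
      ((pd_hcs i (pd_hcs i hgc)).mul_left)
  have : ∫ x, f x * lap g x = - ∫ x, ∑ i, pd i f x * pd i g x := by
    have : ∀ x, f x * lap g x = ∑ i, f x * pd i (pd i g) x := fun x => by
      rw [lap_eq, Finset.mul_sum]
    simp_rw [this]
    rw [integral_finsetSum _ fun i _ => hB i, integral_finsetSum _ fun i _ => hA i,
      ← Finset.sum_neg_distrib]
    refine Finset.sum_congr rfl fun i _ => ?_
    exact integral_mul_fderiv_eq_neg_fderiv_mul_of_integrable (hA i) (hB i)
      (((hf.continuous.mul (pd_contDiff1 i hg).continuous)).integrable_of_hasCompactSupport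
        (pd_hcs i hgc).mul_left)
      (fun x _ => hf.differentiable (by norm_num) x)
      (fun x _ => (pd_contDiff1 i hg).differentiable (by norm_num) x)
  rw [this, h0, neg_neg]

theorem pd_mul {N : ℕ} {f g : EuclideanSpace ℝ (Fin N) → ℝ} {x : EuclideanSpace ℝ (Fin N)} (i : Fin N)
    (hf : DifferentiableAt ℝ f x) (hg : DifferentiableAt ℝ g x) :
    pd i (fun y => f y * g y) x = pd i f x * g x + f x * pd i g x := by
  unfold pd
  rw [fderiv_fun_mul hf hg]
  simp; ring

theorem lap_comp {N : ℕ} {V : EuclideanSpace ℝ (Fin N) → ℝ} {x : EuclideanSpace ℝ (Fin N)}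
    {h h1 : ℝ → ℝ} {h2 : ℝ} (hV : ContDiffAt ℝ 2 V x)
    (hh : ∀ᶠ t in 𝓝 (V x), HasDerivAt h (h1 t) t) (hh1 : HasDerivAt h1 h2 (V x)) :
    lap (fun y => h (V y)) x = h1 (V x) * lap V x + h2 * gsq V x := by
  rw [lap_eq, lap_eq, gsq, Finset.mul_sum, Finset.mul_sum, ← Finset.sum_add_distrib]
  refine Finset.sum_congr rfl fun i _ => ?_
  have e1 : pd i (fun y => h (V y)) =ᶠ[𝓝 x] fun y => h1 (V y) * pd i V y := by
    filter_upwards [hV.continuousAt.eventually hh, hV.eventually (by simp)] with y hy1 hy2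
    have hd := hy1.comp_hasFDerivAt y (hy2.differentiableAt (by norm_num)).hasFDerivAt
    unfold pd
    have : fderiv ℝ (fun y => h (V y)) y = _ := hd.fderiv
    rw [this]; simp
  have e2 : pd i (pd i (fun y => h (V y))) x = pd i (fun y => h1 (V y) * pd i V y) x := by
    conv_lhs => unfold pd
    rw [show (fun y => fderiv ℝ (fun y => h (V y)) y (EuclideanSpace.single i 1)) =
      pd i (fun y => h (V y)) from rfl, e1.fderiv_eq]; rfl
  have hd := hh1.comp_hasFDerivAt x (hV.differentiableAt (by norm_num)).hasFDerivAt
  rw [e2, pd_mul (f := fun y => h1 (V y)) i hd.differentiableAt (pd_diffAt i hV)]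
  have : pd i (fun y => h1 (V y)) x = h2 * pd i V x := by
    unfold pd
    have : fderiv ℝ (fun y => h1 (V y)) x = _ := hd.fderiv
    rw [this]; simp
  rw [this]; ring

theorem pd_congr {N : ℕ} {f g : EuclideanSpace ℝ (Fin N) → ℝ} {x : EuclideanSpace ℝ (Fin N)} (i : Fin N)
    (h : f =ᶠ[𝓝 x] g) : pd i f x = pd i g x := by
  unfold pd; rw [h.fderiv_eq]

theorem lap_sub_mul {N : ℕ} {f g : EuclideanSpace ℝ (Fin N) → ℝ} {x : EuclideanSpace ℝ (Fin N)} (c : ℝ)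
    (hf : ContDiffAt ℝ 2 f x) (hg : ContDiffAt ℝ 2 g x) :
    lap (fun y => f y - c * g y) x = lap f x - c * lap g x := by
  rw [lap_eq, lap_eq, lap_eq, Finset.mul_sum, ← Finset.sum_sub_distrib]
  refine Finset.sum_congr rfl fun i _ => ?_
  have e1 : pd i (fun y => f y - c * g y) =ᶠ[𝓝 x] fun y => pd i f y - c * pd i g y := by
    filter_upwards [hf.eventually (by simp), hg.eventually (by simp)] with y hy1 hy2
    have h1 := hy1.differentiableAt (by norm_num)
    have h2 := hy2.differentiableAt (by norm_num)
    unfold pd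
    rw [fderiv_fun_sub h1 (h2.const_mul c), fderiv_const_mul h2]
    simp
  rw [pd_congr i e1]
  have h1 := pd_diffAt i hf
  have h2 := pd_diffAt i hg
  conv_lhs => unfold pd
  rw [fderiv_fun_sub (f := fun y => fderiv ℝ f y (EuclideanSpace.single i 1))
    (g := fun y => c * fderiv ℝ g y (EuclideanSpace.single i 1)) h1 (h2.const_mul c)]
  have : fderiv ℝ (fun y => c * fderiv ℝ g y (EuclideanSpace.single i 1)) x =
    c • fderiv ℝ (pd i g) x := fderiv_const_mul h2 c
  rw [this]
  simp; rfl

theorem pd_scale {N : ℕ} (f : EuclideanSpace ℝ (Fin N) → ℝ) (z x : EuclideanSpace ℝ (Fin N)) (i : Fin N)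
    (a r c : ℝ) (hf : DifferentiableAt ℝ f (z + r • x)) :
    pd i (fun y => c * (f (z + r • y) + a)) x = c * r * pd i f (z + r • x) := by
  unfold pd
  have h1 : HasFDerivAt (fun y : EuclideanSpace ℝ (Fin N) => z + r • y)
      (r • ContinuousLinearMap.id ℝ (EuclideanSpace ℝ (Fin N))) x :=
    ((hasFDerivAt_id x).const_smul r).const_add z
  have h2 := hf.hasFDerivAt.comp x h1
  have h3 := (h2.add_const a).const_mul c
  have : fderiv ℝ (fun y => c * (f (z + r • y) + a)) x = _ := h3.fderiv
  rw [this]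
  simp; ring

theorem lap_scale {N : ℕ} (f : EuclideanSpace ℝ (Fin N) → ℝ) (z x : EuclideanSpace ℝ (Fin N))
    (a r c : ℝ) (hf : ContDiffAt ℝ 2 f (z + r • x)) :
    lap (fun y => c * (f (z + r • y) + a)) x = c * r ^ 2 * lap f (z + r • x) := by
  rw [lap_eq, lap_eq, Finset.mul_sum]
  refine Finset.sum_congr rfl fun i _ => ?_
  have hc : ContinuousAt (fun y : EuclideanSpace ℝ (Fin N) => z + r • y) x := by fun_prop
  have e1 : pd i (fun y => c * (f (z + r • y) + a)) =ᶠ[𝓝 x]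
      fun y => (c * r) * (pd i f (z + r • y) + 0) := by
    filter_upwards [hc.eventually (hf.eventually (by simp))] with y hy
    rw [pd_scale f z y i a r c (hy.differentiableAt (by norm_num)), add_zero]
  rw [pd_congr i e1, pd_scale (pd i f) z x i 0 r (c * r) (pd_diffAt i hf)]
  ring

theorem contDiff_cutoff {N : ℕ} {n : WithTop ℕ∞} {χ g : EuclideanSpace ℝ (Fin N) → ℝ} {S : Set (EuclideanSpace ℝ (Fin N))}
    (hS : IsOpen S) (hχ : ContDiff ℝ n χ) (hsupp : tsupport χ ⊆ S) (hg : ContDiffOn ℝ n g S) :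
    ContDiff ℝ n (fun x => χ x * g x) := by
  rw [contDiff_iff_contDiffAt]
  intro x
  by_cases hx : x ∈ S
  · exact hχ.contDiffAt.mul (hg.contDiffAt (hS.mem_nhds hx))
  · have hx' : x ∉ tsupport χ := fun h => hx (hsupp h)
    have : (fun x => χ x * g x) =ᶠ[𝓝 x] fun _ => 0 := by
      have := notMem_tsupport_iff_eventuallyEq.mp hx'
      filter_upwards [this] with y hy
      simp [hy]
    exact contDiffAt_const.congr_of_eventuallyEq this
end

section
open MeasureTheory Metric Real Set Filter Topology

theorem hasDerivAt_comp_pos {g g' : ℝ → ℝ} (hg : ∀ t, 0 ≤ t → HasDerivAt g (g' t) t) (h0 : g' 0 = 0)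
    (t : ℝ) : HasDerivAt (fun s => g (max s 0)) (g' (max t 0)) t := by
  rcases lt_trichotomy t 0 with ht | ht | ht
  · have : (fun s => g (max s 0)) =ᶠ[𝓝 t] fun _ => g 0 := by
      filter_upwards [gt_mem_nhds ht] with s hs
      rw [max_eq_right hs.le]
    rw [max_eq_right ht.le, h0]
    exact (hasDerivAt_const t (g 0)).congr_of_eventuallyEq this
  · subst ht
    rw [max_self, h0]
    have a : HasDerivWithinAt (fun s => g (max s 0)) 0 (Ici 0) 0 := by
      have := (hg 0 le_rfl).hasDerivWithinAt (s := Ici 0)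
      rw [h0] at this
      exact this.congr (fun x hx => by rw [max_eq_left hx]) (by simp)
    have b : HasDerivWithinAt (fun s => g (max s 0)) 0 (Iic 0) 0 :=
      (hasDerivWithinAt_const 0 (Iic 0) (g 0)).congr (fun x hx => by rw [max_eq_right hx]) (by simp)
    have := a.union b
    rw [Ici_union_Iic, hasDerivWithinAt_univ] at this
    exact this
  · have : (fun s => g (max s 0)) =ᶠ[𝓝 t] g := by
      filter_upwards [lt_mem_nhds ht] with s hs
      rw [max_eq_left hs.le]
    rw [max_eq_left ht.le]
    exact (hg t ht.le).congr_of_eventuallyEq this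

/-- smooth convex truncation -/
def hH (t : ℝ) : ℝ := (max t 0) ^ 3 / (max t 0 + 1) ^ 2
/-- its derivative -/
def hH1 (t : ℝ) : ℝ := ((max t 0) ^ 3 + 3 * (max t 0) ^ 2) / (max t 0 + 1) ^ 3
/-- its second derivative -/
def hH2 (t : ℝ) : ℝ := 6 * (max t 0) / (max t 0 + 1) ^ 4

theorem hH_deriv (t : ℝ) : HasDerivAt hH (hH1 t) t := by
  refine hasDerivAt_comp_pos (g := fun s => s ^ 3 / (s + 1) ^ 2)
    (g' := fun s => (s ^ 3 + 3 * s ^ 2) / (s + 1) ^ 3) (fun s hs => ?_) (by norm_num) t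
  have h1 : s + 1 ≠ 0 := by positivity
  have := (hasDerivAt_pow 3 s).div (((hasDerivAt_id s).add_const 1).pow 2) (pow_ne_zero 2 h1)
  refine this.congr_deriv ?_
  simp
  field_simp
  ring

theorem hH1_deriv (t : ℝ) : HasDerivAt hH1 (hH2 t) t := by
  refine hasDerivAt_comp_pos (g := fun s => (s ^ 3 + 3 * s ^ 2) / (s + 1) ^ 3)
    (g' := fun s => 6 * s / (s + 1) ^ 4) (fun s hs => ?_) (by norm_num) t
  have h1 : s + 1 ≠ 0 := by positivity
  have := ((hasDerivAt_pow 3 s).add ((hasDerivAt_pow 2 s).const_mul 3)).div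
    (((hasDerivAt_id s).add_const 1).pow 3) (pow_ne_zero 3 h1)
  refine this.congr_deriv ?_
  simp
  field_simp
  ring

theorem hH2_cont : Continuous hH2 := by
  unfold hH2
  refine Continuous.div (by fun_prop) (by fun_prop) fun t => ?_
  positivity

theorem hH_contDiff : ContDiff ℝ 2 hH := by
  have d1 : deriv hH = hH1 := funext fun t => (hH_deriv t).deriv
  have d2 : deriv hH1 = hH2 := funext fun t => (hH1_deriv t).deriv
  have c1 : ContDiff ℝ 1 hH1 := by
    rw [contDiff_one_iff_deriv]
    exact ⟨fun t => (hH1_deriv t).differentiableAt, by rw [d2]; exact hH2_cont⟩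
  rw [show (2 : WithTop ℕ∞) = 1 + 1 by norm_num, contDiff_succ_iff_deriv]
  exact ⟨fun t => (hH_deriv t).differentiableAt, by simp, by rw [d1]; exact c1⟩

theorem hH_nonneg (t : ℝ) : 0 ≤ hH t := by unfold hH; positivity
theorem hH1_nonneg (t : ℝ) : 0 ≤ hH1 t := by unfold hH1; positivity
theorem hH2_nonneg (t : ℝ) : 0 ≤ hH2 t := by unfold hH2; positivity
theorem hH1_zero {t : ℝ} (ht : t ≤ 0) : hH1 t = 0 := by unfold hH1; rw [max_eq_right ht]; simp
theorem hH_le (t : ℝ) : hH t ≤ max t 0 := by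
  unfold hH
  have h : 0 ≤ max t 0 := le_max_right _ _
  rw [div_le_iff₀ (by positivity)]
  nlinarith [mul_nonneg h h, h]
theorem le_hH (t : ℝ) : t ≤ hH t + 2 := by
  unfold hH
  have h : 0 ≤ max t 0 := le_max_right _ _
  have h' : t ≤ max t 0 := le_max_left _ _
  have : max t 0 - 2 ≤ (max t 0) ^ 3 / (max t 0 + 1) ^ 2 := by
    rw [le_div_iff₀ (by positivity)]
    nlinarith [mul_nonneg h h, h]
  linarith

/-- kernel psi -/
def psi {N : ℕ} (y : EuclideanSpace ℝ (Fin N)) : ℝ := (max (1 - ‖y‖ ^ 2) 0) ^ 2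
/-- kernel eta -/
def eta {N : ℕ} (y : EuclideanSpace ℝ (Fin N)) : ℝ := 4 * max (1 - ‖y‖ ^ 2) 0

theorem psi_nonneg {N : ℕ} (y : EuclideanSpace ℝ (Fin N)) : 0 ≤ psi y := by unfold psi; positivity
theorem eta_nonneg {N : ℕ} (y : EuclideanSpace ℝ (Fin N)) : 0 ≤ eta y := by unfold eta; positivity
theorem psi_le {N : ℕ} (y : EuclideanSpace ℝ (Fin N)) : psi y ≤ 1 := by
  unfold psi
  have h1 : max (1 - ‖y‖ ^ 2) 0 ≤ 1 := max_le (by nlinarith [sq_nonneg ‖y‖]) (by norm_num)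
  exact pow_le_one₀ (le_max_right _ _) h1
theorem eta_le {N : ℕ} (y : EuclideanSpace ℝ (Fin N)) : eta y ≤ 4 := by
  unfold eta
  have h1 : max (1 - ‖y‖ ^ 2) 0 ≤ 1 := max_le (by nlinarith [sq_nonneg ‖y‖]) (by norm_num)
  linarith
theorem psi_zero {N : ℕ} {y : EuclideanSpace ℝ (Fin N)} (hy : 1 ≤ ‖y‖) : psi y = 0 := by
  unfold psi; rw [max_eq_right (by nlinarith)]; simp
theorem eta_zero {N : ℕ} {y : EuclideanSpace ℝ (Fin N)} (hy : 1 ≤ ‖y‖) : eta y = 0 := by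
  unfold eta; rw [max_eq_right (by nlinarith)]; simp
theorem eta_cont {N : ℕ} : Continuous (eta (N := N)) := by unfold eta; fun_prop
theorem psi_cont {N : ℕ} : Continuous (psi (N := N)) := by unfold psi; fun_prop
theorem eta_hcs {N : ℕ} : HasCompactSupport (eta (N := N)) :=
  HasCompactSupport.intro (isCompact_closedBall 0 1) fun y hy => eta_zero (by
    simp at hy; exact hy.le)
theorem psi_hcs {N : ℕ} : HasCompactSupport (psi (N := N)) :=
  HasCompactSupport.intro (isCompact_closedBall 0 1) fun y hy => psi_zero (by
    simp at hy; exact hy.le)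
theorem eta_int {N : ℕ} : Integrable (eta (N := N)) :=
  eta_cont.integrable_of_hasCompactSupport eta_hcs

theorem psi_hasFDerivAt {N : ℕ} (y : EuclideanSpace ℝ (Fin N)) :
    HasFDerivAt psi (-(eta y) • innerSL ℝ y) y := by
  have h1 : HasDerivAt (fun s : ℝ => (max s 0) ^ 2) (2 * max (1 - ‖y‖ ^ 2) 0) (1 - ‖y‖ ^ 2) := by
    refine hasDerivAt_comp_pos (g := fun s => s ^ 2) (g' := fun s => 2 * s) (fun s _ => ?_) (by simp) _
    simpa using hasDerivAt_pow 2 s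
  have h2 : HasFDerivAt (fun y : EuclideanSpace ℝ (Fin N) => 1 - ‖y‖ ^ 2) (-(2 • innerSL ℝ y)) y :=
    (hasStrictFDerivAt_norm_sq y).hasFDerivAt.const_sub 1
  have := h1.comp_hasFDerivAt y h2
  refine this.congr_fderiv ?_
  unfold eta
  ext v
  simp
  ring

theorem pd_psi {N : ℕ} (i : Fin N) (y : EuclideanSpace ℝ (Fin N)) : pd i psi y = -(eta y * y i) := by
  unfold pd
  rw [(psi_hasFDerivAt y).fderiv]
  simp [EuclideanSpace.inner_single_right]

theorem fderiv_apply_sum {N : ℕ} (L : EuclideanSpace ℝ (Fin N) →L[ℝ] ℝ) (y : EuclideanSpace ℝ (Fin N)) :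
    L y = ∑ i, y i * L (EuclideanSpace.single i 1) := by
  have h := (EuclideanSpace.basisFun (Fin N) ℝ).sum_repr y
  conv_lhs => rw [← h]
  rw [map_sum]
  refine Finset.sum_congr rfl fun i _ => ?_
  simp

theorem mv_deriv {N : ℕ} {F : EuclideanSpace ℝ (Fin N) → ℝ} (hF : ContDiff ℝ 2 F)
    (hFc : HasCompactSupport F) (x : EuclideanSpace ℝ (Fin N)) (r : ℝ) :
    HasDerivAt (fun r : ℝ => ∫ y, F (x + r • y) * eta y)
      (r * ∫ y, lap F (x + r • y) * psi y) r := by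
  obtain ⟨C, hC⟩ := (hFc.fderiv (𝕜 := ℝ)).exists_bound_of_continuous
    (hF.continuous_fderiv (by norm_num))
  have hC0 : 0 ≤ C := (norm_nonneg _).trans (hC 0)
  have key := hasDerivAt_integral_of_dominated_loc_of_deriv_le (μ := volume) (𝕜 := ℝ) (x₀ := r)
    (F := fun (s : ℝ) (y : EuclideanSpace ℝ (Fin N)) => F (x + s • y) * eta y)
    (F' := fun (s : ℝ) (y : EuclideanSpace ℝ (Fin N)) => fderiv ℝ F (x + s • y) y * eta y)
    (s := univ) (bound := fun y => C * eta y) univ_mem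
    (Eventually.of_forall fun s => by
      have := hF.continuous
      have := eta_cont (N := N)
      exact Continuous.aestronglyMeasurable (by fun_prop))
    (by
      refine Continuous.integrable_of_hasCompactSupport ?_ (eta_hcs.mul_left)
      have := hF.continuous
      have := eta_cont (N := N)
      fun_prop)
    (by
      have h1 := hF.continuous_fderiv (by norm_num)
      have h2 := eta_cont (N := N)
      refine Continuous.aestronglyMeasurable ?_
      refine Continuous.mul ?_ h2
      exact (h1.comp (by fun_prop)).clm_apply continuous_id)
    (by
      refine Eventually.of_forall fun y s _ => ?_
      rw [norm_mul, Real.norm_of_nonneg (eta_nonneg y)]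
      by_cases hy : 1 ≤ ‖y‖
      · rw [eta_zero hy]; simp
      · push Not at hy
        refine mul_le_mul_of_nonneg_right ?_ (eta_nonneg y)
        refine ((fderiv ℝ F (x + s • y)).le_opNorm y).trans ?_
        calc _ ≤ C * 1 := mul_le_mul (hC _) hy.le (norm_nonneg _) hC0
          _ = C := mul_one C)
    (eta_int.const_mul C)
    (by
      refine Eventually.of_forall fun y s _ => ?_
      have h1 : HasDerivAt (fun s : ℝ => x + s • y) y s := by
        simpa using ((hasDerivAt_id s).smul_const y).const_add x
      have h2 := ((hF.differentiable (by norm_num)) (x + s • y)).hasFDerivAt.comp_hasDerivAt s h1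
      exact h2.mul_const (eta y))
  have e := key.2
  refine e.congr_deriv ?_
  symm
  -- integration by parts
  have hpc : ∀ i : Fin N, Continuous (pd i (psi (N := N))) := fun i => by
    have : pd i (psi (N := N)) = fun y => -(eta y * y i) := funext fun y => pd_psi i y
    rw [this]
    have := eta_cont (N := N)
    fun_prop
  have hF1 : ∀ i, ContDiff ℝ 1 (fun y => pd i F (x + r • y)) := fun i =>
    (pd_contDiff1 i hF).comp (by fun_prop)
  have hA : ∀ i : Fin N, Integrable (fun y => pd i F (x + r • y) * pd i psi y) := fun i =>
    ((hF1 i).continuous.mul (hpc i)).integrable_of_hasCompactSupport (pd_hcs i psi_hcs).mul_left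
  have hB : ∀ i : Fin N, Integrable (fun y => pd i (fun y => pd i F (x + r • y)) y * psi y) := fun i =>
    ((pd_cont i (hF1 i)).mul psi_cont).integrable_of_hasCompactSupport psi_hcs.mul_left
  have hI : ∀ i : Fin N, ∫ y, pd i F (x + r • y) * pd i psi y =
      - ∫ y, pd i (fun y => pd i F (x + r • y)) y * psi y := fun i =>
    integral_mul_fderiv_eq_neg_fderiv_mul_of_integrable (hB i) (hA i)
      (((hF1 i).continuous.mul psi_cont).integrable_of_hasCompactSupport psi_hcs.mul_left)
      (fun y _ => (hF1 i).differentiable (by norm_num) y)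
      (fun y _ => (psi_hasFDerivAt y).differentiableAt)
  have hs : ∀ i : Fin N, ∀ y, pd i (fun y => pd i F (x + r • y)) y = r * pd i (pd i F) (x + r • y) := by
    intro i y
    have := pd_scale (pd i F) x y i 0 r 1 ((pd_contDiff1 i hF).differentiable (by norm_num) _)
    simpa using this
  have L : ∀ y, fderiv ℝ F (x + r • y) y * eta y = ∑ i, -(pd i F (x + r • y) * pd i psi y) := by
    intro y
    rw [fderiv_apply_sum (fderiv ℝ F (x + r • y)) y, Finset.sum_mul]
    refine Finset.sum_congr rfl fun i _ => ?_
    rw [pd_psi]; unfold pd; ring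
  have R : ∀ y, r * (lap F (x + r • y) * psi y) = ∑ i, pd i (fun y => pd i F (x + r • y)) y * psi y := by
    intro y
    rw [lap_eq, Finset.sum_mul, Finset.mul_sum]
    refine Finset.sum_congr rfl fun i _ => ?_
    rw [hs]; ring
  rw [← integral_const_mul]
  simp_rw [L, R]
  rw [integral_finsetSum _ fun i _ => hB i, integral_finsetSum _ fun i _ => (hA i).fun_neg]
  refine Finset.sum_congr rfl fun i _ => ?_
  rw [integral_neg, hI, neg_neg]

/-- normalization constant -/
def c0 (N : ℕ) : ℝ := ∫ y : EuclideanSpace ℝ (Fin N), eta y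

theorem c0_pos (N : ℕ) : 0 < c0 N := by
  unfold c0
  refine eta_cont.integral_pos_of_hasCompactSupport_nonneg_nonzero eta_hcs eta_nonneg (x := 0) ?_
  simp [eta]

end

section
open MeasureTheory Metric Real Set Filter Topology

theorem ofReal_integral_le' {α : Type*} [MeasurableSpace α] {μ : Measure α} (f : α → ℝ) :
    ENNReal.ofReal (∫ a, f a ∂μ) ≤ ∫⁻ a, ENNReal.ofReal (f a) ∂μ := by
  by_cases hf : Integrable f μ
  · have h1 : ∫ a, f a ∂μ ≤ ∫ a, max (f a) 0 ∂μ :=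
      integral_mono hf hf.pos_part fun a => le_max_left _ _
    refine (ENNReal.ofReal_le_ofReal h1).trans ?_
    rw [ofReal_integral_eq_lintegral_ofReal hf.pos_part
      (Eventually.of_forall fun a => le_max_right _ _)]
    refine lintegral_mono fun a => ?_
    simp
  · rw [integral_undef hf]; simp

theorem integral_affine {N : ℕ} (g : EuclideanSpace ℝ (Fin N) → ℝ) (x : EuclideanSpace ℝ (Fin N))
    {R : ℝ} (hR : 0 < R) : ∫ y, g (x + R • y) = (R ^ N)⁻¹ * ∫ y, g y := by
  have := Measure.integral_comp_smul_of_nonneg (volume : Measure (EuclideanSpace ℝ (Fin N)))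
    (fun y => g (x + y)) R (hR := hR.le)
  rw [this, integral_add_left_eq_self]
  simp

theorem mem_ball_aff {N : ℕ} {x y : EuclideanSpace ℝ (Fin N)} {R : ℝ} (hR : 0 < R) (hy : ‖y‖ < 1) :
    x + R • y ∈ ball x R := by
  rw [mem_ball, dist_eq_norm, add_sub_cancel_left, norm_smul, Real.norm_of_nonneg hR.le]
  nlinarith

theorem mv_avg_le {N : ℕ} {F : EuclideanSpace ℝ (Fin N) → ℝ} (hF : Continuous F)
    (x : EuclideanSpace ℝ (Fin N)) {R : ℝ} (hR : 0 < R) (hpos : ∀ y ∈ ball x R, 0 ≤ F y) :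
    ∫ y, F (x + R • y) * eta y ≤ 4 * (R ^ N)⁻¹ * ∫ y in ball x R, F y := by
  have hFint : IntegrableOn F (ball x R) :=
    (hF.continuousOn.integrableOn_compact (isCompact_closedBall x R)).mono_set ball_subset_closedBall
  have h1 : ∫ y, F (x + R • y) * eta y ≤ ∫ y, 4 * (ball x R).indicator F (x + R • y) := by
    refine integral_mono ?_ ?_ fun y => ?_
    · have := eta_cont (N := N)
      exact Continuous.integrable_of_hasCompactSupport (by fun_prop) eta_hcs.mul_left
    · refine Integrable.const_mul ?_ 4
      have h2 : Integrable ((ball x R).indicator F) := by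
        rw [integrable_indicator_iff measurableSet_ball]; exact hFint
      have := (h2.comp_add_left x).comp_smul hR.ne'
      exact this
    · show F (x + R • y) * eta y ≤ 4 * (ball x R).indicator F (x + R • y)
      by_cases hy : ‖y‖ < 1
      · have hm := mem_ball_aff (x := x) hR hy
        rw [indicator_of_mem hm]
        nlinarith [hpos _ hm, eta_le y]
      · rw [eta_zero (not_lt.mp hy), mul_zero]
        refine mul_nonneg (by norm_num) (indicator_nonneg hpos _)
  refine h1.trans ?_
  rw [integral_const_mul, integral_affine _ x hR, integral_indicator measurableSet_ball]
  linarith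

theorem mv_sub {N : ℕ} {F : EuclideanSpace ℝ (Fin N) → ℝ} (hF : ContDiff ℝ 2 F)
    (hFc : HasCompactSupport F) (x : EuclideanSpace ℝ (Fin N)) {R : ℝ} (hR : 0 < R)
    (hsub : ∀ y ∈ ball x R, 0 ≤ lap F y) (hpos : ∀ y ∈ ball x R, 0 ≤ F y) :
    c0 N * F x ≤ 4 * (R ^ N)⁻¹ * ∫ y in ball x R, F y := by
  refine le_trans ?_ (mv_avg_le hF.continuous x hR hpos)
  have hmono : MonotoneOn (fun r : ℝ => ∫ y, F (x + r • y) * eta y) (Icc 0 R) := by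
    refine monotoneOn_of_deriv_nonneg (convex_Icc 0 R)
      (fun r _ => (mv_deriv hF hFc x r).continuousAt.continuousWithinAt)
      (fun r _ => (mv_deriv hF hFc x r).differentiableAt.differentiableWithinAt) fun r hr => ?_
    rw [interior_Icc] at hr
    rw [(mv_deriv hF hFc x r).deriv]
    refine mul_nonneg hr.1.le (integral_nonneg fun y => ?_)
    show 0 ≤ lap F (x + r • y) * psi y
    by_cases hy : ‖y‖ < 1
    · exact mul_nonneg (hsub _ (ball_subset_ball hr.2.le (mem_ball_aff hr.1 hy))) (psi_nonneg y)
    · rw [psi_zero (not_lt.mp hy), mul_zero]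
  have := hmono (left_mem_Icc.mpr hR.le) (right_mem_Icc.mpr hR.le) hR.le
  simp only [zero_smul, add_zero, integral_const_mul] at this
  rw [c0, mul_comm]
  exact this

/-- potential -/
def pot {N : ℕ} (R : ℝ) (f1 : EuclideanSpace ℝ (Fin N) → ℝ) (x : EuclideanSpace ℝ (Fin N)) : ENNReal :=
  ∫⁻ r in Ioc (0:ℝ) R, ∫⁻ y in ball (0 : EuclideanSpace ℝ (Fin N)) 1, ENNReal.ofReal (f1 (x + r • y))

theorem mv_super {N : ℕ} {V : EuclideanSpace ℝ (Fin N) → ℝ} (hF : ContDiff ℝ 2 V)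
    (hFc : HasCompactSupport V) (x : EuclideanSpace ℝ (Fin N)) {R : ℝ} (hR : 0 < R) (hR1 : R ≤ 1)
    {A : ℝ} (hA : 0 ≤ A) {f1 : EuclideanSpace ℝ (Fin N) → ℝ} 
    (hf1n : ∀ y, 0 ≤ f1 y)
    (hsub : ∀ y ∈ ball x R, - lap V y ≤ A + f1 y) :
    ENNReal.ofReal (c0 N * V x) ≤ ENNReal.ofReal (∫ y, V (x + R • y) * eta y)
      + ENNReal.ofReal A * volume (ball (0 : EuclideanSpace ℝ (Fin N)) 1) + pot R f1 x := by
  have hlc := lap_cont hF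
  have hlcs : HasCompactSupport (lap V) := by
    have : lap V = fun x => ∑ i, pd i (pd i V) x := by ext; rfl
    refine HasCompactSupport.intro hFc.isCompact fun y hy => ?_
    have h0 : V =ᶠ[𝓝 y] fun _ => 0 := notMem_tsupport_iff_eventuallyEq.mp hy
    rw [lap_congr h0]
    simp [lap]
  obtain ⟨C, hC⟩ := hlcs.exists_bound_of_continuous hlc
  have hcont : Continuous fun r : ℝ => ∫ y, lap V (x + r • y) * psi y := by
    refine continuous_of_dominated (bound := fun y => C * psi y) (fun r => ?_) (fun r => ?_) ?_ ?_
    · have := psi_cont (N := N)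
      exact Continuous.aestronglyMeasurable (by fun_prop)
    · refine Eventually.of_forall fun y => ?_
      rw [norm_mul, Real.norm_of_nonneg (psi_nonneg y)]
      exact mul_le_mul_of_nonneg_right (hC _) (psi_nonneg y)
    · exact (psi_cont.integrable_of_hasCompactSupport psi_hcs).const_mul C
    · exact Eventually.of_forall fun y => by fun_prop
  have ftc := intervalIntegral.integral_eq_sub_of_hasDerivAt (a := 0) (b := R)
    (fun r _ => mv_deriv hF hFc x r) (Continuous.intervalIntegrable (by fun_prop) _ _)
  simp only [zero_smul, add_zero, integral_const_mul] at ftc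
  have e1 : c0 N * V x = (∫ y, V (x + R • y) * eta y) +
      ∫ r in Ioc (0:ℝ) R, -(r * ∫ y, lap V (x + r • y) * psi y) := by
    rw [intervalIntegral.integral_of_le hR.le] at ftc
    rw [integral_neg, ftc, c0]; ring
  rw [e1, add_assoc]
  refine ENNReal.ofReal_add_le.trans (add_le_add le_rfl ?_)
  refine (ofReal_integral_le' _).trans ?_
  have e2 : ∀ r ∈ Ioc (0:ℝ) R, ENNReal.ofReal (-(r * ∫ y, lap V (x + r • y) * psi y)) ≤
      ENNReal.ofReal A * volume (ball (0 : EuclideanSpace ℝ (Fin N)) 1) +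
      ∫⁻ y in ball (0 : EuclideanSpace ℝ (Fin N)) 1, ENNReal.ofReal (f1 (x + r • y)) := by
    intro r hr
    rw [← integral_const_mul, ← integral_neg]
    refine (ofReal_integral_le' _).trans ?_
    have e3 : ∀ y, ENNReal.ofReal (-(r * (lap V (x + r • y) * psi y))) ≤
        (ball (0 : EuclideanSpace ℝ (Fin N)) 1).indicator
          (fun y => ENNReal.ofReal A + ENNReal.ofReal (f1 (x + r • y))) y := by
      intro y
      by_cases hy : ‖y‖ < 1
      · have hm : y ∈ ball (0 : EuclideanSpace ℝ (Fin N)) 1 := by simpa using hy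
        rw [indicator_of_mem hm, ← ENNReal.ofReal_add hA (hf1n _)]
        refine ENNReal.ofReal_le_ofReal ?_
        have h1 := hsub _ (ball_subset_ball hr.2 (mem_ball_aff (x := x) hr.1 hy))
        have h2 : 0 ≤ A + f1 (x + r • y) := add_nonneg hA (hf1n _)
        have h3 : 0 ≤ r * psi y := mul_nonneg hr.1.le (psi_nonneg y)
        have h4 : r * psi y ≤ 1 := mul_le_one₀ (hr.2.trans hR1) (psi_nonneg y) (psi_le y)
        calc -(r * (lap V (x + r • y) * psi y)) = (r * psi y) * (- lap V (x + r • y)) := by ring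
          _ ≤ (r * psi y) * (A + f1 (x + r • y)) := mul_le_mul_of_nonneg_left h1 h3
          _ ≤ 1 * (A + f1 (x + r • y)) := mul_le_mul_of_nonneg_right h4 h2
          _ = _ := one_mul _
      · rw [psi_zero (not_lt.mp hy)]; simp
    refine (lintegral_mono e3).trans ?_
    rw [lintegral_indicator measurableSet_ball, lintegral_add_left measurable_const]
    simp
  refine (setLIntegral_mono' measurableSet_Ioc e2).trans ?_
  rw [lintegral_add_left measurable_const]
  refine add_le_add ?_ le_rfl
  rw [lintegral_const]
  simp only [Measure.restrict_apply MeasurableSet.univ, univ_inter, Real.volume_Ioc, sub_zero]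
  calc _ ≤ ENNReal.ofReal A * volume (ball (0 : EuclideanSpace ℝ (Fin N)) 1) * 1 := by
        gcongr
        exact ENNReal.ofReal_le_one.mpr hR1
    _ = _ := mul_one _

theorem pot_meas {N : ℕ} (R : ℝ) {f1 : EuclideanSpace ℝ (Fin N) → ℝ} (hf1 : Measurable f1) :
    Measurable (pot R f1) := by
  unfold pot
  have h : Measurable fun q : (EuclideanSpace ℝ (Fin N) × ℝ) × EuclideanSpace ℝ (Fin N) =>
      ENNReal.ofReal (f1 (q.1.1 + q.1.2 • q.2)) := by fun_prop
  have h2 : Measurable fun q : EuclideanSpace ℝ (Fin N) × ℝ =>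
      ∫⁻ y in ball (0 : EuclideanSpace ℝ (Fin N)) 1, ENNReal.ofReal (f1 (q.1 + q.2 • y)) :=
    h.lintegral_prod_right'
  exact h2.lintegral_prod_right'

theorem pot_int {N : ℕ} {R : ℝ} (hR1 : R ≤ 1) {f1 : EuclideanSpace ℝ (Fin N) → ℝ} (hf1 : Measurable f1) :
    ∫⁻ x, pot R f1 x ≤ volume (ball (0 : EuclideanSpace ℝ (Fin N)) 1) * ∫⁻ x, ENNReal.ofReal (f1 x) := by
  unfold pot
  have h : Measurable fun q : (EuclideanSpace ℝ (Fin N) × ℝ) × EuclideanSpace ℝ (Fin N) =>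
      ENNReal.ofReal (f1 (q.1.1 + q.1.2 • q.2)) := by fun_prop
  have h2 : Measurable fun q : EuclideanSpace ℝ (Fin N) × ℝ =>
      ∫⁻ y in ball (0 : EuclideanSpace ℝ (Fin N)) 1, ENNReal.ofReal (f1 (q.1 + q.2 • y)) :=
    h.lintegral_prod_right'
  rw [lintegral_lintegral_swap (f := fun (x : EuclideanSpace ℝ (Fin N)) (r : ℝ) => 
    ∫⁻ y in ball (0 : EuclideanSpace ℝ (Fin N)) 1, ENNReal.ofReal (f1 (x + r • y))) h2.aemeasurable]
  have e : ∀ r : ℝ, ∫⁻ x, ∫⁻ y in ball (0 : EuclideanSpace ℝ (Fin N)) 1, ENNReal.ofReal (f1 (x + r • y))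
      = volume (ball (0 : EuclideanSpace ℝ (Fin N)) 1) * ∫⁻ x, ENNReal.ofReal (f1 x) := by
    intro r
    have h3 : Measurable fun q : EuclideanSpace ℝ (Fin N) × EuclideanSpace ℝ (Fin N) =>
      ENNReal.ofReal (f1 (q.1 + r • q.2)) := by fun_prop
    rw [lintegral_lintegral_swap (f := fun (x y : EuclideanSpace ℝ (Fin N)) => 
      ENNReal.ofReal (f1 (x + r • y))) h3.aemeasurable]
    have : ∀ y : EuclideanSpace ℝ (Fin N), ∫⁻ x, ENNReal.ofReal (f1 (x + r • y)) =
        ∫⁻ x, ENNReal.ofReal (f1 x) := fun y =>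
      lintegral_add_right_eq_self (fun x => ENNReal.ofReal (f1 x)) (r • y)
    simp_rw [this]
    rw [lintegral_const]
    simp [mul_comm]
  simp_rw [e]
  rw [lintegral_const]
  simp only [Measure.restrict_apply MeasurableSet.univ, univ_inter, Real.volume_Ioc, sub_zero]
  exact mul_le_of_le_one_right zero_le (ENNReal.ofReal_le_one.mpr hR1)
end

section
open MeasureTheory Metric Real Set Filter Topology
open scoped Convolution Pointwise in
theorem stab_ext {N : ℕ} {W : EuclideanSpace ℝ (Fin N) → ℝ} (hW : ContinuousOn W (ball 0 1)) (s : ℝ)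
    (h : ∀ φ, IsTestFun (ball (0 : EuclideanSpace ℝ (Fin N)) 1) φ →
      s * ∫ x, W x * φ x ^ 2 ≤ ∫ x, gsq φ x)
    {ρ : ℝ} (hρ : ρ < 1) {φ : EuclideanSpace ℝ (Fin N) → ℝ} (hφ : ContDiff ℝ 1 φ)
    (hsupp : ∀ x, ρ < ‖x‖ → φ x = 0) :
    s * ∫ x, W x * φ x ^ 2 ≤ ∫ x, gsq φ x := by
  have hφc : HasCompactSupport φ :=
    HasCompactSupport.intro (isCompact_closedBall 0 ρ) fun x hx => hsupp x (by simpa using hx)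
  set ρ' := (1 + ρ) / 2 with hρ'
  have hρ'1 : ρ' < 1 := by rw [hρ']; linarith
  let δ : ℕ → ℝ := fun n => (1 - ρ) / 2 * (1 / ((n : ℝ) + 1))
  have hδ : ∀ n, 0 < δ n := fun n => by
    have : 0 < 1 - ρ := by linarith
    positivity
  have hδle : ∀ n, δ n ≤ (1 - ρ) / 2 := fun n => by
    have h1 : (1 : ℝ) / ((n : ℝ) + 1) ≤ 1 := by
      rw [div_le_one (by positivity)]; linarith [Nat.cast_nonneg (α := ℝ) n]
    exact mul_le_of_le_one_right (by linarith) h1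
  have hδt : Tendsto δ atTop (𝓝 0) := by
    have := (tendsto_one_div_add_atTop_nhds_zero_nat (𝕜 := ℝ)).const_mul ((1 - ρ) / 2)
    rw [mul_zero] at this
    exact this
  let b : ℕ → ContDiffBump (0 : EuclideanSpace ℝ (Fin N)) := fun n =>
    ⟨δ n / 2, δ n, half_pos (hδ n), half_lt_self (hδ n)⟩
  let k : ℕ → EuclideanSpace ℝ (Fin N) → ℝ := fun n => (b n).normed volume
  have hbt : Tendsto (fun n => (b n).rOut) atTop (𝓝 0) := hδt
  let L := ContinuousLinearMap.lsmul ℝ ℝ (E := ℝ)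
  let Φ : ℕ → EuclideanSpace ℝ (Fin N) → ℝ := fun n => k n ⋆[L, volume] φ
  have hkc : ∀ n, HasCompactSupport (k n) := fun n => (b n).hasCompactSupport_normed
  have hkC : ∀ n, ContDiff ℝ (⊤ : ℕ∞) (k n) := fun n => (b n).contDiff_normed
  have hkl : ∀ n, LocallyIntegrable (k n) volume := fun n => (hkC n).continuous.locallyIntegrable
  have hΦC : ∀ n, ContDiff ℝ (⊤ : ℕ∞) (Φ n) := fun n =>
    (hkc n).contDiff_convolution_left L (hkC n) hφ.continuous.locallyIntegrable
  have hΦs : ∀ n x, ρ' < ‖x‖ → Φ n x = 0 := by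
    intro n x hx
    by_contra hne
    have h1 : x ∈ Function.support (k n) + Function.support φ :=
      support_convolution_subset L (Function.mem_support.mpr hne)
    obtain ⟨a, ha, c, hc, rfl⟩ := Set.mem_add.mp h1
    have ha' : a ∈ ball (0 : EuclideanSpace ℝ (Fin N)) (δ n) := by
      have := (b n).support_normed_eq (μ := volume)
      change a ∈ Function.support ((b n).normed volume) at ha
      rw [this] at ha; exact ha
    have hc' : ‖c‖ ≤ ρ := by
      by_contra hcc
      exact hc (hsupp c (not_le.mp hcc))
    have := norm_add_le a c
    simp at ha'
    have := hδle n
    rw [hρ'] at hx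
    linarith
  have hpd : ∀ i n x, pd i (Φ n) x = (k n ⋆[L, volume] (pd i φ)) x := by
    intro i n x
    have h1 := hφc.hasFDerivAt_convolution_right L (hkl n) hφ x
    unfold pd
    rw [h1.fderiv, convolution_precompR_apply L (hkl n) (hφc.fderiv ℝ)
      (hφ.continuous_fderiv (by norm_num))]
  have conv : ∀ g : EuclideanSpace ℝ (Fin N) → ℝ, Continuous g → ∀ x,
      Tendsto (fun n => (k n ⋆[L, volume] g) x) atTop (𝓝 (g x)) := fun g hg x =>
    ContDiffBump.convolution_tendsto_right_of_continuous hbt hg x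
  have bd : ∀ g : EuclideanSpace ℝ (Fin N) → ℝ, Continuous g → HasCompactSupport g →
      ∃ C, 0 ≤ C ∧ ∀ n x, |(k n ⋆[L, volume] g) x| ≤ C := by
    intro g hg hgc
    obtain ⟨C, hC⟩ := hgc.exists_bound_of_continuous hg
    have hC0 : 0 ≤ C := (norm_nonneg _).trans (hC 0)
    refine ⟨3 * C, by positivity, fun n x => ?_⟩
    have h1 := (b n).dist_normed_convolution_le (μ := volume) (x₀ := x) (ε := 2 * C)
      hg.aestronglyMeasurable (fun y _ => by
        rw [dist_eq_norm]
        linarith [norm_sub_le (g y) (g x), hC x, hC y])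
    rw [dist_eq_norm] at h1
    have h2 := norm_le_norm_add_norm_sub' ((k n ⋆[L, volume] g) x) (g x)
    have h3 := hC x
    change ‖(k n ⋆[L, volume] g) x - g x‖ ≤ 2 * C at h1
    rw [← Real.norm_eq_abs]
    linarith
  -- weight bound
  obtain ⟨CW, hCW⟩ := (isCompact_closedBall (0 : EuclideanSpace ℝ (Fin N)) ρ').exists_bound_of_continuousOn
    (hW.mono (closedBall_subset_ball hρ'1))
  have lim1 : Tendsto (fun n => ∫ x, W x * Φ n x ^ 2) atTop (𝓝 (∫ x, W x * φ x ^ 2)) := by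
    obtain ⟨C, hC0, hC⟩ := bd φ hφ.continuous hφc
    have e : ∀ g : EuclideanSpace ℝ (Fin N) → ℝ, (∀ x, ρ' < ‖x‖ → g x = 0) →
        ∫ x, W x * g x ^ 2 = ∫ x in closedBall 0 ρ', W x * g x ^ 2 := by
      intro g hg
      rw [setIntegral_eq_integral_of_forall_compl_eq_zero]
      intro x hx
      rw [hg x (by simpa using hx)]; simp
    rw [e φ (fun x hx => hsupp x (by rw [hρ'] at hx; linarith))]
    simp_rw [fun n => e (Φ n) (hΦs n)]
    refine tendsto_integral_of_dominated_convergence (fun _ => CW * C ^ 2) (fun n => ?_) ?_ (fun n => ?_) ?_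
    · exact ((hW.mono (closedBall_subset_ball hρ'1)).mul
        ((hΦC n).continuous.pow 2).continuousOn).aestronglyMeasurable measurableSet_closedBall
    · exact integrableOn_const (by
        exact (measure_closedBall_lt_top).ne)
    · refine (ae_restrict_iff' measurableSet_closedBall).mpr (Eventually.of_forall fun x hx => ?_)
      rw [norm_mul, norm_pow]
      have h1 := hCW x hx
      have h2 : ‖Φ n x‖ ≤ C := hC n x
      have h3 : 0 ≤ CW := (norm_nonneg _).trans h1
      gcongr
    · exact Eventually.of_forall fun x => ((conv φ hφ.continuous x).pow 2).const_mul _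
  have lim2 : Tendsto (fun n => ∫ x, gsq (Φ n) x) atTop (𝓝 (∫ x, gsq φ x)) := by
    have hb : ∀ i : Fin N, ∃ C, 0 ≤ C ∧ ∀ n x, |(k n ⋆[L, volume] (pd i φ)) x| ≤ C := fun i =>
      bd (pd i φ) (pd_cont i hφ) (pd_hcs i hφc)
    choose C hC0 hC using hb
    have hz : ∀ n x, ρ' < ‖x‖ → gsq (Φ n) x = 0 := by
      intro n x hx
      have : Φ n =ᶠ[𝓝 x] fun _ => 0 := by
        filter_upwards [(isOpen_lt continuous_const continuous_norm).mem_nhds hx] with y hy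
        exact hΦs n y hy
      unfold gsq
      refine Finset.sum_eq_zero fun i _ => ?_
      rw [pd_congr i this]; simp [pd]
    refine tendsto_integral_of_dominated_convergence
      ((closedBall (0 : EuclideanSpace ℝ (Fin N)) ρ').indicator fun _ => ∑ i, C i ^ 2)
      (fun n => ?_) ?_ (fun n => ?_) ?_
    · exact (gsq_cont ((hΦC n).of_le (by exact_mod_cast le_top))).aestronglyMeasurable
    · rw [integrable_indicator_iff measurableSet_closedBall]
      exact integrableOn_const (measure_closedBall_lt_top).ne
    · refine Eventually.of_forall fun x => ?_
      rw [Real.norm_of_nonneg (gsq_nonneg _ _)]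
      by_cases hx : ρ' < ‖x‖
      · rw [hz n x hx]
        exact indicator_nonneg (fun _ _ => Finset.sum_nonneg fun _ _ => sq_nonneg _) _
      · rw [indicator_of_mem (by simpa using hx)]
        unfold gsq
        refine Finset.sum_le_sum fun i _ => ?_
        rw [hpd, ← sq_abs]
        exact pow_le_pow_left₀ (abs_nonneg _) (hC i n x) 2
    · refine Eventually.of_forall fun x => ?_
      unfold gsq
      refine tendsto_finsetSum _ fun i _ => ?_
      simp_rw [hpd]
      exact (conv (pd i φ) (pd_cont i hφ) x).pow 2
  refine le_of_tendsto_of_tendsto' (lim1.const_mul s) lim2 fun n => h (Φ n) ⟨hΦC n, ?_, ?_⟩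
  · exact HasCompactSupport.intro (isCompact_closedBall 0 ρ') fun x hx => hΦs n x (by simpa using hx)
  · have : tsupport (Φ n) ⊆ closedBall 0 ρ' := by
      refine closure_minimal ?_ isClosed_closedBall
      intro x hx
      by_contra hxx
      exact hx (hΦs n x (by simpa using hxx))
    exact this.trans (closedBall_subset_ball hρ'1)
end

section
open MeasureTheory Metric Real Set Filter Topology

/-- normalized solution on the unit ball -/
structure CoreSol {N : ℕ} (lam gam p θ : ℝ) (U V : EuclideanSpace ℝ (Fin N) → ℝ) : Prop where
  hU : ContDiff ℝ 2 U
  hUc : HasCompactSupport U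
  hV : ContDiff ℝ 2 V
  hVc : HasCompactSupport V
  Upos : ∀ x ∈ ball (0 : EuclideanSpace ℝ (Fin N)) 1, 0 < U x
  Vpos : ∀ x ∈ ball (0 : EuclideanSpace ℝ (Fin N)) 1, 0 < V x
  lapU : ∀ x ∈ ball (0 : EuclideanSpace ℝ (Fin N)) 1, -lap U x = lam * V x ^ p
  lapV : ∀ x ∈ ball (0 : EuclideanSpace ℝ (Fin N)) 1, -lap V x = gam * U x ^ θ
  stab : ∀ φ, IsTestFun (ball (0 : EuclideanSpace ℝ (Fin N)) 1) φ →
    √(lam * gam * p * θ) * ∫ x, (V x ^ ((p - 1) / 2) * U x ^ ((θ - 1) / 2)) * φ x ^ 2 ≤ ∫ x, gsq φ x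

theorem exists_cutoff (N : ℕ) {a b : ℝ} (ha : 0 < a) (hab : a < b) :
    ∃ ζ : EuclideanSpace ℝ (Fin N) → ℝ, ContDiff ℝ 2 ζ ∧ HasCompactSupport ζ ∧
      (∀ x, 0 ≤ ζ x) ∧ (∀ x, ζ x ≤ 1) ∧ (∀ x ∈ closedBall 0 a, ζ x = 1) ∧
      (∀ x, b ≤ ‖x‖ → ζ x = 0) ∧ tsupport ζ ⊆ closedBall 0 b := by
  let f : ContDiffBump (0 : EuclideanSpace ℝ (Fin N)) := ⟨a, b, ha, hab⟩
  refine ⟨f, f.contDiff, f.hasCompactSupport, fun x => f.nonneg, fun x => f.le_one,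
    fun x hx => f.one_of_mem_closedBall hx, fun x hx => f.zero_of_le_dist (by simpa using hx), ?_⟩
  rw [f.tsupport_eq]

variable {N : ℕ} {lam gam p θ : ℝ} {U V : EuclideanSpace ℝ (Fin N) → ℝ}

/-- volume of unit ball -/
def om (N : ℕ) : ℝ := volume.real (ball (0 : EuclideanSpace ℝ (Fin N)) 1)

theorem om_nonneg (N : ℕ) : 0 ≤ om N := measureReal_nonneg

theorem om_pos (N : ℕ) : 0 < om N := by
  unfold om
  rw [measureReal_def]
  exact ENNReal.toReal_pos (measure_ball_pos _ _ one_pos).ne' measure_ball_lt_top.ne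

theorem contInt {f : EuclideanSpace ℝ (Fin N) → ℝ} (hf : Continuous f) (x : EuclideanSpace ℝ (Fin N)) (r : ℝ) :
    IntegrableOn f (ball x r) :=
  (hf.continuousOn.integrableOn_compact (isCompact_closedBall x r)).mono_set ball_subset_closedBall

theorem intV (h : CoreSol lam gam p θ U V) {m : ℝ} (hm : 0 < m)
    (hmV : ∫ x in ball 0 1, V x ^ 2 = m ^ 2) :
    ∫ x in ball 0 1, V x ≤ (1 + om N) * m := by
  have hVc := h.hV.continuous
  have h1 : ∫ x in ball 0 1, V x ≤ ∫ x in ball 0 1, ((1 / m) * V x ^ 2 + m) := by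
    refine setIntegral_mono (contInt hVc _ _) (contInt (by fun_prop) _ _) fun x => ?_
    have : 0 ≤ (V x - m) ^ 2 / m + V x ^ 2 / m + m := by positivity
    have e : (1 / m * V x ^ 2 + m - V x) = ((V x - m) ^ 2 / m + V x ^ 2 / m + m) / 2 := by
      field_simp; ring
    show V x ≤ 1 / m * V x ^ 2 + m
    linarith
  refine h1.trans ?_
  rw [integral_add (contInt (by fun_prop) _ _) (contInt continuous_const _ _), integral_const_mul, hmV,
    setIntegral_const]
  change 1 / m * m ^ 2 + om N • m ≤ _
  rw [smul_eq_mul]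
  apply le_of_eq; field_simp

theorem step1 (N : ℕ) {lam gam p θ : ℝ} (hgam : 0 < gam) : ∃ C > 0, ∀ U V : EuclideanSpace ℝ (Fin N) → ℝ,
    CoreSol lam gam p θ U V → ∀ m > 0, ∫ x in ball 0 1, V x ^ 2 = m ^ 2 →
      ∫ x in ball 0 (9/10), U x ^ θ ≤ C * m := by
  obtain ⟨ζ, hζ, hζc, hζ0, hζ1, hζa, hζb, hζt⟩ := exists_cutoff N (a := 9/10) (b := 19/20) (by norm_num) (by norm_num)
  have hl : HasCompactSupport (lap ζ) := by
    refine HasCompactSupport.of_support_subset_isCompact hζc fun x hx => ?_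
    by_contra hxx
    apply hx
    have : ζ =ᶠ[𝓝 x] fun _ => 0 := by
      filter_upwards [(isClosed_tsupport ζ).isOpen_compl.mem_nhds hxx] with y hy
      exact image_eq_zero_of_notMem_tsupport hy
    rw [lap_congr this]; simp [lap]
  obtain ⟨D, hD⟩ := hl.exists_bound_of_continuous (lap_cont hζ)
  have hD0 : 0 ≤ D := (norm_nonneg _).trans (hD 0)
  have hom := om_pos N
  refine ⟨(1 + om N) * (D + 1) / gam, by positivity, fun U V h m hm hmV => ?_⟩
  have hg := green2 h.hV hζ hζc
  have hVc := h.hV.continuous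
  -- left bound
  have hL : gam * ∫ x in ball 0 (9/10), U x ^ θ ≤ ∫ x, - (lap V x * ζ x) := by
    rw [← integral_const_mul]
    have hi : Integrable (fun x => - (lap V x * ζ x)) :=
      (((lap_cont h.hV).mul hζ.continuous).neg).integrable_of_hasCompactSupport (hζc.mul_left.neg)
    have e : ∫ x in ball 0 (9/10), gam * U x ^ θ = ∫ x in ball 0 (9/10), - (lap V x * ζ x) := by
      refine setIntegral_congr_fun measurableSet_ball fun x hx => ?_
      have h1 := h.lapV x (ball_subset_ball (by norm_num) hx)
      show gam * U x ^ θ = - (lap V x * ζ x)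
      rw [hζa x (ball_subset_closedBall hx), ← h1]; ring
    rw [e]
    refine setIntegral_le_integral hi (Eventually.of_forall fun x => ?_)
    show 0 ≤ - (lap V x * ζ x)
    by_cases hx : x ∈ ball (0 : EuclideanSpace ℝ (Fin N)) 1
    · have h1 := h.lapV x hx
      have h2 := h.Upos x hx
      have : - (lap V x * ζ x) = (gam * U x ^ θ) * ζ x := by rw [← h1]; ring
      rw [this]
      have := hζ0 x
      positivity
    · rw [hζb x (by simp at hx; linarith)]; simp
  have hR : ∫ x, - (lap V x * ζ x) ≤ D * ∫ x in ball 0 1, V x := by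
    rw [integral_neg, hg, ← integral_neg, ← integral_const_mul]
    rw [← setIntegral_eq_integral_of_forall_compl_eq_zero (s := ball (0 : EuclideanSpace ℝ (Fin N)) 1)]
    · refine setIntegral_mono_on (contInt (by have := lap_cont hζ; fun_prop) _ _) (contInt (by fun_prop) _ _)
        measurableSet_ball fun x hx => ?_
      have h1 := h.Vpos x hx
      have h2 := hD x
      rw [Real.norm_eq_abs] at h2
      have := (abs_le.mp h2).1
      nlinarith
    · intro x hx
      have : x ∉ tsupport ζ := fun hh => by
        have := hζt hh
        simp at this hx; linarith
      have : ζ =ᶠ[𝓝 x] fun _ => 0 := by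
        filter_upwards [(isClosed_tsupport ζ).isOpen_compl.mem_nhds this] with y hy
        exact image_eq_zero_of_notMem_tsupport hy
      rw [lap_congr this]; simp [lap]
  have h3 := intV h hm hmV
  rw [div_mul_eq_mul_div, le_div_iff₀ hgam, mul_comm]
  refine (hL.trans hR).trans ?_
  calc D * ∫ x in ball 0 1, V x ≤ D * ((1 + om N) * m) := by gcongr
    _ ≤ (D + 1) * ((1 + om N) * m) := by gcongr; linarith
    _ = _ := by ring

theorem rpowInt (h : CoreSol lam gam p θ U V) (hθ : 0 ≤ θ) (x : EuclideanSpace ℝ (Fin N)) (r : ℝ) :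
    IntegrableOn (fun x => U x ^ θ) (ball x r) :=
  contInt (h.hU.continuous.rpow_const fun _ => Or.inr hθ) x r

theorem step1' (N : ℕ) {lam gam p θ : ℝ} (hgam : 0 < gam) (hθ : 1 < θ) : ∃ C > 0, ∀ U V : EuclideanSpace ℝ (Fin N) → ℝ,
    CoreSol lam gam p θ U V → ∀ δ > 0, ∫ x in ball 0 1, V x ^ 2 = (δ ^ θ) ^ 2 →
      ∫ x in ball 0 (9/10), U x ≤ C * δ := by
  obtain ⟨C, hC, h1⟩ := step1 N (lam := lam) (p := p) (θ := θ) hgam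
  have hom := om_pos N
  refine ⟨om N + C, by positivity, fun U V h δ hδ hδV => ?_⟩
  have h2 := h1 U V h (δ ^ θ) (by positivity) hδV
  have h3 : ∫ x in ball 0 (9/10), U x ≤ ∫ x in ball 0 (9/10), (δ + (δ ^ (θ - 1))⁻¹ * U x ^ θ) := by
    have hi := (contInt (continuous_const (y := δ)) (0 : EuclideanSpace ℝ (Fin N)) (9/10)).add
      ((rpowInt h (by linarith) 0 (9/10)).const_mul (δ ^ (θ - 1))⁻¹)
    refine setIntegral_mono_on (contInt h.hU.continuous _ _) hi measurableSet_ball fun x hx => ?_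
    have hU := h.Upos x (ball_subset_ball (by norm_num) hx)
    rcases le_total (U x) δ with hle | hle
    · have : 0 ≤ (δ ^ (θ - 1))⁻¹ * U x ^ θ := by positivity
      linarith
    · have e : U x ^ θ = U x ^ (θ - 1) * U x := by
        rw [← Real.rpow_add_one hU.ne']; ring_nf
      have h4 : δ ^ (θ - 1) ≤ U x ^ (θ - 1) := Real.rpow_le_rpow hδ.le hle (by linarith)
      have h5 : 0 < δ ^ (θ - 1) := by positivity
      have : U x ≤ (δ ^ (θ - 1))⁻¹ * U x ^ θ := by
        rw [inv_mul_eq_div, le_div_iff₀ h5, e, mul_comm]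
        gcongr
      linarith
  refine h3.trans ?_
  rw [integral_add (contInt continuous_const _ _) ((rpowInt h (by linarith) 0 (9/10)).const_mul _),
    integral_const_mul, setIntegral_const, smul_eq_mul]
  have h6 : volume.real (ball (0 : EuclideanSpace ℝ (Fin N)) (9/10)) ≤ om N :=
    measureReal_mono (ball_subset_ball (by norm_num)) measure_ball_lt_top.ne
  have e : δ ^ θ = δ ^ (θ - 1) * δ := by
    rw [← Real.rpow_add_one hδ.ne']; ring_nf
  have h5 : 0 < δ ^ (θ - 1) := by positivity
  calc _ ≤ om N * δ + (δ ^ (θ - 1))⁻¹ * (C * δ ^ θ) := by gcongr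
    _ = _ := by rw [e]; field_simp

theorem step2 (N : ℕ) {lam gam p θ : ℝ} (hgam : 0 < gam) (hp : 1 < p) (hpθ : p ≤ θ) {K σ : ℝ}
    (hσ : σ = (p + 1) / (θ + 1)) (hK : 0 < K) (hKe : K ^ (θ + 1) * σ * gam = lam) :
    ∃ C > 0, ∀ U V : EuclideanSpace ℝ (Fin N) → ℝ,
    CoreSol lam gam p θ U V → ∀ δ > 0, ∫ x in ball 0 1, V x ^ 2 = (δ ^ θ) ^ 2 →
      ∀ x ∈ ball 0 (8/10), U x - K * V x ^ σ ≤ C * δ := by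
  obtain ⟨C, hC, h1⟩ := step1' N (lam := lam) (p := p) hgam (by linarith : 1 < θ)
  obtain ⟨χ, hχ, hχc, hχ0, hχ1, hχa, hχb, hχt⟩ := exists_cutoff N (a := 9/10) (b := 19/20) (by norm_num) (by norm_num)
  have hc0 := c0_pos N
  have hθ1 : 0 < θ + 1 := by linarith
  have hσ0 : 0 < σ := by rw [hσ]; apply div_pos <;> linarith
  have hσ1 : σ ≤ 1 := by rw [hσ, div_le_one hθ1]; linarith
  have hσe : σ * (θ + 1) = p + 1 := by rw [hσ]; field_simp
  refine ⟨4 * (((1/10 : ℝ)) ^ N)⁻¹ * C / c0 N + 2, by positivity, fun U V h δ hδ hδV x hx => ?_⟩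
  have h2 := h1 U V h δ hδ hδV
  set w : EuclideanSpace ℝ (Fin N) → ℝ := fun y => U y - K * V y ^ σ with hw
  have hVs : ∀ y ∈ ball (0 : EuclideanSpace ℝ (Fin N)) 1, ContDiffAt ℝ 2 (fun y => V y ^ σ) y := fun y hy =>
    h.hV.contDiffAt.rpow_const_of_ne (h.Vpos y hy).ne'
  have hwC : ∀ y ∈ ball (0 : EuclideanSpace ℝ (Fin N)) 1, ContDiffAt ℝ 2 w y := fun y hy =>
    h.hU.contDiffAt.sub (contDiffAt_const.mul (hVs y hy))
  set g : EuclideanSpace ℝ (Fin N) → ℝ := fun y => δ * hH (w y / δ) with hg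
  have hgC : ContDiffOn ℝ 2 g (ball 0 1) := fun y hy =>
    (contDiffAt_const.mul (hH_contDiff.contDiffAt.comp y ((hwC y hy).div_const δ))).contDiffWithinAt
  set F : EuclideanSpace ℝ (Fin N) → ℝ := fun y => χ y * g y with hF
  have hFC : ContDiff ℝ 2 F := contDiff_cutoff isOpen_ball hχ
    (hχt.trans (closedBall_subset_ball (by norm_num))) hgC
  have hFc : HasCompactSupport F := hχc.mul_right
  have hsubs : ball x (1/10) ⊆ ball 0 (9/10) := by
    apply ball_subset_ball'
    simp at hx ⊢; linarith
  have hFg : ∀ y ∈ ball (0 : EuclideanSpace ℝ (Fin N)) (9/10), F y = g y := fun y hy => by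
    simp only [hF]; rw [hχa y (ball_subset_closedBall hy), one_mul]
  have lapw : ∀ y ∈ ball (0 : EuclideanSpace ℝ (Fin N)) 1, 0 ≤ w y → 0 ≤ lap w y := by
    intro y hy hwy
    have hVp := h.Vpos y hy
    have hUp := h.Upos y hy
    have e1 : lap w y = lap U y - K * lap (fun y => V y ^ σ) y :=
      lap_sub_mul K h.hU.contDiffAt (hVs y hy)
    have e2 : lap (fun y => V y ^ σ) y = (σ * V y ^ (σ - 1)) * lap V y
        + (σ * ((σ - 1) * V y ^ (σ - 1 - 1))) * gsq V y := by
      refine lap_comp (h := fun t => t ^ σ) (h1 := fun t => σ * t ^ (σ - 1)) h.hV.contDiffAt ?_ ?_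
      · filter_upwards [lt_mem_nhds hVp] with t ht
        exact Real.hasDerivAt_rpow_const (Or.inl ht.ne')
      · exact (Real.hasDerivAt_rpow_const (Or.inl hVp.ne')).const_mul σ
    have e3 := h.lapU y hy
    have e4 := h.lapV y hy
    have hUK : K * V y ^ σ ≤ U y := by simp only [hw] at hwy; linarith
    have hUθ : (K * V y ^ σ) ^ θ ≤ U y ^ θ := Real.rpow_le_rpow (by positivity) hUK (by linarith)
    have hKθ : (K * V y ^ σ) ^ θ = K ^ θ * V y ^ (σ * θ) := by
      rw [Real.mul_rpow hK.le (by positivity), ← Real.rpow_mul hVp.le]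
    have hKe' : K * σ * gam * K ^ θ = lam := by
      rw [← hKe, Real.rpow_add_one hK.ne']; ring
    have hVe : V y ^ p = V y ^ (σ - 1) * V y ^ (σ * θ) := by
      rw [← Real.rpow_add hVp]; congr 1; linarith
    have key : lam * V y ^ p ≤ K * (σ * V y ^ (σ - 1)) * (gam * U y ^ θ) := by
      calc lam * V y ^ p = K * (σ * V y ^ (σ - 1)) * (gam * (K ^ θ * V y ^ (σ * θ))) := by
            rw [← hKe', hVe]; ring
        _ ≤ _ := by rw [← hKθ]; gcongr
    have hneg : 0 ≤ K * (σ * ((1 - σ) * V y ^ (σ - 1 - 1))) * gsq V y := by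
      have := gsq_nonneg V y
      have : 0 ≤ 1 - σ := by linarith
      positivity
    rw [e1, e2]
    have e3' : lap U y = - (lam * V y ^ p) := by linarith
    have e4' : lap V y = - (gam * U y ^ θ) := by linarith
    rw [e3', e4']
    linarith
  have lapF : ∀ y ∈ ball x (1/10), 0 ≤ lap F y := by
    intro y hy
    have hy9 := hsubs hy
    have hy1 : y ∈ ball (0 : EuclideanSpace ℝ (Fin N)) 1 := ball_subset_ball (by norm_num) hy9
    have : F =ᶠ[𝓝 y] g := by
      filter_upwards [isOpen_ball.mem_nhds hy9] with a ha using hFg a ha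
    rw [lap_congr this]
    have e : lap g y = hH1 (w y / δ) * lap w y + (hH2 (w y / δ) * (1 / δ)) * gsq w y := by
      refine lap_comp (h := fun t => δ * hH (t / δ)) (h1 := fun t => hH1 (t / δ)) (hwC y hy1) ?_ ?_
      · refine Eventually.of_forall fun t => ?_
        have := ((hH_deriv (t / δ)).comp t ((hasDerivAt_id t).div_const δ)).const_mul δ
        have e5 : hH1 (t / δ) = δ * (hH1 (t / δ) * (1 / δ)) := by field_simp
        show HasDerivAt (fun t => δ * hH (t / δ)) (hH1 (t / δ)) t
        rw [e5]
        exact this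
      · exact (hH1_deriv (w y / δ)).comp (w y) ((hasDerivAt_id (w y)).div_const δ)
    rw [e]
    have t2 : 0 ≤ (hH2 (w y / δ) * (1 / δ)) * gsq w y := by
      have := hH2_nonneg (w y / δ); have := gsq_nonneg w y; positivity
    have t1 : 0 ≤ hH1 (w y / δ) * lap w y := by
      rcases le_total 0 (w y) with h0 | h0
      · exact mul_nonneg (hH1_nonneg _) (lapw y hy1 h0)
      · rw [hH1_zero (div_nonpos_of_nonpos_of_nonneg h0 hδ.le)]; simp
    linarith
  have hFn : ∀ y, 0 ≤ F y := fun y => mul_nonneg (hχ0 y) (mul_nonneg hδ.le (hH_nonneg _))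
  have h3 := mv_sub hFC hFc x (by norm_num : (0:ℝ) < 1/10) lapF (fun y _ => hFn y)
  have h4 : ∫ y in ball x (1/10), F y ≤ C * δ := by
    refine le_trans ?_ h2
    refine (setIntegral_mono_set (contInt hFC.continuous 0 (9/10)) (Eventually.of_forall hFn)
      hsubs.eventuallyLE).trans ?_
    refine setIntegral_mono_on (contInt hFC.continuous _ _) (contInt h.hU.continuous _ _) measurableSet_ball
      fun y hy => ?_
    have hy1 : y ∈ ball (0 : EuclideanSpace ℝ (Fin N)) 1 := ball_subset_ball (by norm_num) hy
    rw [hFg y hy]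
    have hVp := h.Vpos y hy1
    have hUp := h.Upos y hy1
    calc g y ≤ δ * max (w y / δ) 0 := by
          simp only [hg]; exact mul_le_mul_of_nonneg_left (hH_le _) hδ.le
      _ = max (w y) 0 := by
          rw [mul_max_of_nonneg _ _ hδ.le, mul_zero, mul_div_cancel₀ _ hδ.ne']
      _ ≤ U y := by
          apply max_le _ hUp.le
          simp only [hw]
          have : 0 ≤ K * V y ^ σ := by positivity
          linarith
  have hx9 : x ∈ ball (0 : EuclideanSpace ℝ (Fin N)) (9/10) := ball_subset_ball (by norm_num) hx
  have h5 : w x ≤ F x + 2 * δ := by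
    rw [hFg x hx9]
    have := le_hH (w x / δ)
    have h6 := mul_le_mul_of_nonneg_left this hδ.le
    rw [mul_div_cancel₀ _ hδ.ne'] at h6
    simp only [hg]; linarith
  have h6 : F x ≤ 4 * (((1/10 : ℝ)) ^ N)⁻¹ * C / c0 N * δ := by
    rw [div_mul_eq_mul_div, le_div_iff₀ hc0]
    calc F x * c0 N = c0 N * F x := by ring
      _ ≤ _ := h3
      _ ≤ 4 * (((1/10 : ℝ)) ^ N)⁻¹ * (C * δ) := by gcongr
      _ = _ := by ring
  show w x ≤ _
  linarith
end

section
open MeasureTheory Metric Real Set Filter Topology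

theorem consts {lam gam p θ : ℝ} (hp : 1 < p) (hpθ : p ≤ θ) (hlam : 0 < lam) (hgam : 0 < gam) :
    ∃ K b q : ℝ, 0 < K ∧ K < b ∧ 0 < q ∧ q < 1 ∧ K ^ (θ + 1) * ((p + 1) / (θ + 1)) * gam = lam ∧
      gam * b ^ ((θ + 1) / 2) = q * √(lam * gam * p * θ) := by
  have hp0 : 0 < p := by linarith
  have hθ0 : 0 < θ := by linarith
  have hbase : 0 < lam * (θ + 1) / ((p + 1) * gam) := by positivity
  set K := (lam * (θ + 1) / ((p + 1) * gam)) ^ (1 / (θ + 1)) with hK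
  have hK0 : 0 < K := by positivity
  have hKe : K ^ (θ + 1) = lam * (θ + 1) / ((p + 1) * gam) := by
    rw [hK, ← Real.rpow_mul hbase.le, one_div_mul_cancel (by positivity), Real.rpow_one]
  set a := p ^ (1 / (θ + 1)) with ha
  have ha0 : 0 < a := by positivity
  have ha1 : 1 < a := Real.one_lt_rpow hp (by positivity)
  have hae : a ^ (θ + 1) = p := by
    rw [ha, ← Real.rpow_mul hp0.le, one_div_mul_cancel (by positivity), Real.rpow_one]
  have hs : 0 < √(lam * gam * p * θ) := Real.sqrt_pos.mpr (by positivity)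
  refine ⟨K, a * K, gam * (a * K) ^ ((θ + 1) / 2) / √(lam * gam * p * θ), hK0, by nlinarith, by positivity, ?_, ?_, ?_⟩
  · rw [div_lt_one hs]
    apply Real.lt_sqrt_of_sq_lt
    have e : ((a * K) ^ ((θ + 1) / 2)) ^ 2 = p * (lam * (θ + 1) / ((p + 1) * gam)) := by
      rw [← Real.rpow_natCast, ← Real.rpow_mul (by positivity)]
      have : (θ + 1) / 2 * ((2 : ℕ) : ℝ) = θ + 1 := by push_cast; ring
      rw [this, Real.mul_rpow ha0.le hK0.le, hae, hKe]
    rw [mul_pow, e]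
    have e2 : gam ^ 2 * (p * (lam * (θ + 1) / ((p + 1) * gam))) = (lam * gam * p) * ((θ + 1) / (p + 1)) := by
      field_simp
    rw [e2]
    have : (θ + 1) / (p + 1) < θ := by
      rw [div_lt_iff₀ (by positivity)]; nlinarith
    gcongr
  · rw [hKe]; field_simp
  · field_simp

/-- pointwise bound in the good region -/
theorem pt1 {gam p θ b q s0 u v : ℝ} (hgam : 0 < gam) (hp : 1 < p) (hpθ : p ≤ θ) (hb : 0 < b)
    (hbq : gam * b ^ ((θ + 1) / 2) = q * s0) (hu : 0 < u) (hv : 0 < v)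
    (h : u ≤ b * v ^ ((p + 1) / (θ + 1))) :
    gam * u ^ θ * v ≤ q * (s0 * (v ^ ((p - 1) / 2) * u ^ ((θ - 1) / 2) * v ^ 2)) := by
  have hθ : 0 < θ + 1 := by linarith
  have h1 : u ^ ((θ + 1) / 2) ≤ b ^ ((θ + 1) / 2) * v ^ ((p + 1) / 2) := by
    refine (Real.rpow_le_rpow hu.le h (by positivity)).trans (le_of_eq ?_)
    rw [Real.mul_rpow hb.le (by positivity), ← Real.rpow_mul hv.le]
    congr 2; field_simp
  have e1 : u ^ θ = u ^ ((θ + 1) / 2) * u ^ ((θ - 1) / 2) := by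
    rw [← Real.rpow_add hu]; congr 1; ring
  have e2 : v ^ ((p - 1) / 2) * v ^ 2 = v ^ ((p + 1) / 2) * v := by
    rw [← Real.rpow_natCast, ← Real.rpow_add hv, ← Real.rpow_add_one hv.ne']; congr 1; push_cast; ring
  calc gam * u ^ θ * v = gam * u ^ ((θ + 1) / 2) * (u ^ ((θ - 1) / 2) * v) := by rw [e1]; ring
    _ ≤ gam * (b ^ ((θ + 1) / 2) * v ^ ((p + 1) / 2)) * (u ^ ((θ - 1) / 2) * v) := by gcongr
    _ = (gam * b ^ ((θ + 1) / 2)) * u ^ ((θ - 1) / 2) * (v ^ ((p + 1) / 2) * v) := by ring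
    _ = _ := by rw [hbq, ← e2]; ring

/-- pointwise bound in the bad region -/
theorem pt2 {gam θ C1 δ K b u y : ℝ} (hgam : 0 < gam) (hθ : 0 < θ) (hb : 0 < b) (hKb : K < b) (hK : 0 < K)
    (hu : 0 < u) (hC : 0 < C1) (hδ : 0 < δ) (hw : u - K * y ≤ C1 * δ) (h : b * y < u) :
    gam * u ^ θ ≤ gam * (C1 / (1 - K / b)) ^ θ * δ ^ θ := by
  have h1 : 0 < 1 - K / b := by rw [sub_pos, div_lt_one hb]; exact hKb
  have h2 : K * y ≤ K / b * u := by
    rw [div_mul_eq_mul_div, le_div_iff₀ hb]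
    nlinarith
  have h3 : u ≤ C1 / (1 - K / b) * δ := by
    rw [div_mul_eq_mul_div, le_div_iff₀ h1]; linarith
  have h4 : u ^ θ ≤ (C1 / (1 - K / b) * δ) ^ θ := Real.rpow_le_rpow hu.le h3 hθ.le
  rw [Real.mul_rpow (by positivity) hδ.le] at h4
  rw [mul_assoc]; gcongr

theorem gsq_energy {N : ℕ} {V ζ : EuclideanSpace ℝ (Fin N) → ℝ} (hV : ContDiff ℝ 2 V) (hζ : ContDiff ℝ 2 ζ)
    (hζc : HasCompactSupport ζ) :
    ∫ x, gsq (fun y => V y * ζ y) x = (∫ x, V x ^ 2 * gsq ζ x) + ∫ x, (- lap V x) * V x * ζ x ^ 2 := by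
  have hV1 : ContDiff ℝ 1 V := hV.of_le (by norm_num)
  have hζ1 : ContDiff ℝ 1 ζ := hζ.of_le (by norm_num)
  have dV : ∀ x, DifferentiableAt ℝ V x := fun x => (hV1.differentiable (by norm_num)) x
  have dζ : ∀ x, DifferentiableAt ℝ ζ x := fun x => (hζ1.differentiable (by norm_num)) x
  have hgc : HasCompactSupport fun y => (V y * ζ y) * ζ y := hζc.mul_left
  have hg := green hV (hV1.mul hζ1 |>.mul hζ1) hgc
  have e : ∀ x, gsq (fun y => V y * ζ y) x = V x ^ 2 * gsq ζ x
      + ∑ i, pd i V x * pd i (fun y => (V y * ζ y) * ζ y) x := by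
    intro x
    unfold gsq
    rw [Finset.mul_sum, ← Finset.sum_add_distrib]
    refine Finset.sum_congr rfl fun i _ => ?_
    rw [pd_mul (f := fun y => V y * ζ y) i ((dV x).mul (dζ x)) (dζ x), pd_mul i (dV x) (dζ x)]
    ring
  simp_rw [e]
  have hgsqc : HasCompactSupport (gsq ζ) := by
    refine HasCompactSupport.intro hζc fun x hx => ?_
    have : ζ =ᶠ[𝓝 x] fun _ => 0 := by
      filter_upwards [(isClosed_tsupport ζ).isOpen_compl.mem_nhds hx] with y hy
      exact image_eq_zero_of_notMem_tsupport hy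
    unfold gsq
    refine Finset.sum_eq_zero fun i _ => ?_
    rw [pd_congr i this]; simp [pd]
  rw [integral_add, hg, ← integral_neg]
  · congr 1
    refine integral_congr_ae (Eventually.of_forall fun x => ?_)
    show -(lap V x * (V x * ζ x * ζ x)) = _
    ring
  · exact ((hV.continuous.pow 2).mul (gsq_cont hζ1)).integrable_of_hasCompactSupport hgsqc.mul_left
  · refine integrable_finsetSum _ fun i _ => ?_
    exact ((pd_cont i hV1).mul (pd_cont i (hV1.mul hζ1 |>.mul hζ1))).integrable_of_hasCompactSupport
      (pd_hcs i hgc).mul_left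

/-- Splitting of the nonlinearity and energy estimate. -/
theorem step3 {N : ℕ} {lam gam p θ : ℝ} (hp : 1 < p) (hpθ : p ≤ θ) (hlam : 0 < lam) (hgam : 0 < gam)
    {ζ : EuclideanSpace ℝ (Fin N) → ℝ} (hζ : ContDiff ℝ 2 ζ) (hζc : HasCompactSupport ζ)
    (hζ0 : ∀ x, 0 ≤ ζ x) (hζ1 : ∀ x, ζ x ≤ 1) (hζb : ∀ x, 7/10 ≤ ‖x‖ → ζ x = 0) :
    ∃ C A B : ℝ, 0 < C ∧ 0 < A ∧ 0 < B ∧ ∀ U V : EuclideanSpace ℝ (Fin N) → ℝ,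
    CoreSol lam gam p θ U V → ∀ m > 0, ∫ x in ball 0 1, V x ^ 2 = m ^ 2 →
      (∫ x, (- lap V x) * V x * ζ x ^ 2 ≤ C * m ^ 2) ∧ (∫ x, gsq (fun y => V y * ζ y) x ≤ C * m ^ 2) ∧
      (∀ x ∈ ball 0 (8/10), gam * U x ^ θ ≤ A * m +
        min (gam * U x ^ θ) (B * V x ^ ((p + 1) / (θ + 1) * θ))) := by
  obtain ⟨K, b, q, hK, hKb, hq0, hq1, hKe, hbq⟩ := consts hp hpθ hlam hgam
  have hb : 0 < b := hK.trans hKb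
  have hθ0 : 0 < θ := by linarith
  obtain ⟨C1, hC1, h2⟩ := step2 N hgam hp hpθ rfl hK hKe
  have hom := om_pos N
  have hζ' : ContDiff ℝ 1 ζ := hζ.of_le (by norm_num)
  have hgz : ∀ x ∉ ball (0 : EuclideanSpace ℝ (Fin N)) 1, gsq ζ x = 0 := by
    intro x hx
    have : ζ =ᶠ[𝓝 x] fun _ => 0 := by
      have hx' : 7/10 < ‖x‖ := by simp at hx; linarith
      filter_upwards [(isOpen_lt continuous_const continuous_norm).mem_nhds hx'] with y hy
      exact hζb y (le_of_lt hy)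
    unfold gsq
    refine Finset.sum_eq_zero fun i _ => ?_
    rw [pd_congr i this]; simp [pd]
  have hζn : ∀ x, x ∉ ball (0 : EuclideanSpace ℝ (Fin N)) 1 → ζ x = 0 := fun x hx =>
    hζb x (by simp at hx; linarith)
  obtain ⟨D, hD⟩ := (isCompact_closedBall (0 : EuclideanSpace ℝ (Fin N)) 1).exists_bound_of_continuousOn
    (gsq_cont hζ').continuousOn
  have hD0 : 0 ≤ D := (norm_nonneg _).trans (hD 0 (by simp))
  have hKb1 : 0 < 1 - K / b := by rw [sub_pos, div_lt_one hb]; exact hKb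
  set A := gam * (C1 / (1 - K / b)) ^ θ with hA
  have hA0 : 0 < A := by positivity
  have hq' : 0 < 1 - q := by linarith
  refine ⟨(D + A * (1 + om N)) / (1 - q) + D, A, gam * b ^ θ, by positivity, hA0, by positivity,
    fun U V h m hm hmV => ?_⟩
  set δ := m ^ (1 / θ) with hδ
  have hδ0 : 0 < δ := by positivity
  have hδe : δ ^ θ = m := by
    rw [hδ, ← Real.rpow_mul hm.le, one_div_mul_cancel hθ0.ne', Real.rpow_one]
  have hw := h2 U V h δ hδ0 (by rw [hδe]; exact hmV)
  set s0 := √(lam * gam * p * θ) with hs0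
  have hs0n : 0 ≤ s0 := Real.sqrt_nonneg _
  -- pointwise
  have hpt : ∀ x ∈ ball (0 : EuclideanSpace ℝ (Fin N)) (8/10), gam * U x ^ θ * V x ≤
      q * (s0 * (V x ^ ((p - 1) / 2) * U x ^ ((θ - 1) / 2) * V x ^ 2)) + A * m * V x := by
    intro x hx
    have hx1 : x ∈ ball (0 : EuclideanSpace ℝ (Fin N)) 1 := ball_subset_ball (by norm_num) hx
    have hu := h.Upos x hx1
    have hv := h.Vpos x hx1
    rcases le_or_gt (U x) (b * V x ^ ((p + 1) / (θ + 1))) with hc | hc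
    · have := pt1 hgam hp hpθ hb hbq hu hv hc
      have : 0 ≤ A * m * V x := by positivity
      linarith
    · have h3 := pt2 hgam hθ0 hb hKb hK hu hC1 hδ0 (hw x hx) hc
      rw [hδe] at h3
      have h4 := mul_le_mul_of_nonneg_right h3 hv.le
      have : 0 ≤ q * (s0 * (V x ^ ((p - 1) / 2) * U x ^ ((θ - 1) / 2) * V x ^ 2)) := by positivity
      linarith
  have hVc := h.hV.continuous
  have hUc := h.hU.continuous
  have hζcont := hζ.continuous
  have hVp : Continuous fun x => V x ^ ((p - 1) / 2) := hVc.rpow_const fun _ => Or.inr (by linarith)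
  have hUp : Continuous fun x => U x ^ ((θ - 1) / 2) := hUc.rpow_const fun _ => Or.inr (by linarith)
  set W : EuclideanSpace ℝ (Fin N) → ℝ := fun x => V x ^ ((p - 1) / 2) * U x ^ ((θ - 1) / 2) with hWd
  have hWc : Continuous W := hVp.mul hUp
  have hst := stab_ext (W := W) hWc.continuousOn s0 h.stab (ρ := 7/10) (by norm_num)
    (φ := fun y => V y * ζ y) ((h.hV.of_le (by norm_num)).mul hζ')
    (fun x hx => by rw [hζb x hx.le, mul_zero])
  have hen := gsq_energy h.hV hζ hζc
  set X := ∫ x, (- lap V x) * V x * ζ x ^ 2 with hX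
  set Y := ∫ x, V x ^ 2 * gsq ζ x with hY
  set Z := ∫ x, W x * (V x * ζ x) ^ 2 with hZ
  have hYle : Y ≤ D * m ^ 2 := by
    rw [hY, ← hmV, ← integral_const_mul, ← setIntegral_eq_integral_of_forall_compl_eq_zero
      (s := ball (0 : EuclideanSpace ℝ (Fin N)) 1) (fun x hx => by rw [hgz x hx, mul_zero])]
    refine setIntegral_mono_on (contInt ((hVc.pow 2).mul (gsq_cont hζ')) _ _)
      (contInt (by fun_prop) _ _) measurableSet_ball fun x hx => ?_
    have := (le_abs_self _).trans (hD x (ball_subset_closedBall hx))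
    rw [mul_comm]
    exact mul_le_mul_of_nonneg_right this (sq_nonneg _)
  have hz2 : HasCompactSupport fun x => ζ x ^ 2 := by
    have : (fun x => ζ x ^ 2) = fun x => ζ x * ζ x := by ext x; ring
    rw [this]; exact hζc.mul_left
  have hi1 : Integrable fun x => W x * (V x * ζ x) ^ 2 := by
    have hcc : Continuous fun x => W x * (V x * ζ x) ^ 2 := by fun_prop
    refine hcc.integrable_of_hasCompactSupport ?_
    have : (fun x => W x * (V x * ζ x) ^ 2) = fun x => (W x * V x ^ 2) * ζ x ^ 2 := by ext x; ring
    rw [this]; exact hz2.mul_left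
  have hi2 : Integrable fun x => V x * ζ x ^ 2 :=
    (hVc.mul (hζcont.pow 2)).integrable_of_hasCompactSupport hz2.mul_left
  have hVζ : ∫ x, V x * ζ x ^ 2 ≤ (1 + om N) * m := by
    refine le_trans ?_ (intV h hm hmV)
    rw [← setIntegral_eq_integral_of_forall_compl_eq_zero
      (s := ball (0 : EuclideanSpace ℝ (Fin N)) 1) (fun x hx => by rw [hζn x hx]; simp)]
    refine setIntegral_mono_on (contInt (by fun_prop) _ _)
      (contInt (by fun_prop) _ _) measurableSet_ball fun x hx => ?_
    have hv := h.Vpos x hx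
    have : ζ x ^ 2 ≤ 1 := pow_le_one₀ (hζ0 x) (hζ1 x)
    nlinarith
  have hXle : X ≤ q * (s0 * Z) + A * m * ((1 + om N) * m) := by
    have : X ≤ ∫ x, (q * s0 * (W x * (V x * ζ x) ^ 2) + A * m * (V x * ζ x ^ 2)) := by
      refine integral_mono ?_ ((hi1.const_mul _).add (hi2.const_mul _)) fun x => ?_
      · exact (((lap_cont h.hV).neg.mul hVc).mul (hζcont.pow 2)).integrable_of_hasCompactSupport hz2.mul_left
      · by_cases hx : x ∈ ball (0 : EuclideanSpace ℝ (Fin N)) (8/10)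
        · have h3 := mul_le_mul_of_nonneg_right (hpt x hx) (sq_nonneg (ζ x))
          show (- lap V x) * V x * ζ x ^ 2 ≤ _
          rw [h.lapV x (ball_subset_ball (by norm_num) hx)]
          refine h3.trans (le_of_eq ?_)
          simp only [hWd]; ring
        · have : ζ x = 0 := hζb x (by simp at hx; linarith)
          simp [this]
    rw [integral_add (hi1.const_mul _) (hi2.const_mul _), integral_const_mul, integral_const_mul] at this
    have h3 : A * m * (∫ x, V x * ζ x ^ 2) ≤ A * m * ((1 + om N) * m) := by gcongr
    rw [mul_assoc q] at this
    linarith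
  have hXfin : X ≤ (D + A * (1 + om N)) / (1 - q) * m ^ 2 := by
    rw [div_mul_eq_mul_div, le_div_iff₀ hq']
    have h3 : q * (s0 * Z) ≤ q * (Y + X) := by
      rw [← hen]; exact mul_le_mul_of_nonneg_left hst hq0.le
    have hYn : 0 ≤ Y := integral_nonneg fun x => mul_nonneg (sq_nonneg _) (gsq_nonneg _ _)
    nlinarith
  refine ⟨?_, ?_, fun x hx => ?_⟩
  · have : 0 ≤ D * m ^ 2 := by positivity
    linarith
  · rw [hen]; linarith
  · have hx1 : x ∈ ball (0 : EuclideanSpace ℝ (Fin N)) 1 := ball_subset_ball (by norm_num) hx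
    have hu := h.Upos x hx1
    have hv := h.Vpos x hx1
    rcases le_or_gt (U x) (b * V x ^ ((p + 1) / (θ + 1))) with hc | hc
    · have h3 : gam * U x ^ θ ≤ gam * b ^ θ * V x ^ ((p + 1) / (θ + 1) * θ) := by
        have := Real.rpow_le_rpow hu.le hc hθ0.le
        rw [Real.mul_rpow hb.le (by positivity), ← Real.rpow_mul hv.le] at this
        rw [mul_assoc]; gcongr
      rw [min_eq_left h3]
      have : 0 < A * m := by positivity
      linarith
    · have h3 := pt2 hgam hθ0 hb hKb hK hu hC1 hδ0 (hw x hx) hc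
      rw [hδe] at h3
      have : 0 ≤ min (gam * U x ^ θ) (gam * b ^ θ * V x ^ ((p + 1) / (θ + 1) * θ)) := by
        apply le_min <;> positivity
      linarith
end

section
open MeasureTheory Metric Real Set Filter Topology

theorem sq_eLp {N : ℕ} {F : Type*} [NormedAddCommGroup F] {φ : EuclideanSpace ℝ (Fin N) → F}
    (hφ : Continuous φ) (hc : HasCompactSupport φ) (S : Set (EuclideanSpace ℝ (Fin N))) :
    ENNReal.ofReal (∫ x in S, ‖φ x‖ ^ 2) = (eLpNorm φ ((2 : NNReal) : ENNReal) (volume.restrict S)) ^ 2 := by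
  have h1 := eLpNorm_nnreal_pow_eq_lintegral (f := φ) (p := 2) (μ := volume.restrict S) (by norm_num)
  have h2 : ((2 : NNReal) : ℝ) = ((2 : ℕ) : ℝ) := by norm_num
  rw [h2, ENNReal.rpow_natCast] at h1
  rw [h1, ofReal_integral_eq_lintegral_ofReal]
  · refine lintegral_congr fun x => ?_
    rw [ENNReal.rpow_natCast, ENNReal.ofReal_pow (norm_nonneg _), ofReal_norm]
  · refine Integrable.integrableOn ?_
    have hcc : Continuous fun x => ‖φ x‖ ^ 2 := by fun_prop
    refine hcc.integrable_of_hasCompactSupport ?_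
    exact hc.comp_left (g := fun y => ‖y‖ ^ 2) (by simp)
  · exact Eventually.of_forall fun x => by positivity

theorem sobolev {N : ℕ} (hN : 3 ≤ N) : ∃ C : ℝ, 0 < C ∧ ∀ φ : EuclideanSpace ℝ (Fin N) → ℝ,
    ContDiff ℝ 1 φ → HasCompactSupport φ → ∀ (S : Set (EuclideanSpace ℝ (Fin N))) (M : ℝ), 0 ≤ M →
      volume S ≤ ENNReal.ofReal M →
      ∫ x in S, φ x ^ 2 ≤ C * M ^ (2 / (N : ℝ)) * ∫ x, gsq φ x := by
  have hN0 : (3 : ℝ) ≤ N := by exact_mod_cast hN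
  have hfin : Module.finrank ℝ (EuclideanSpace ℝ (Fin N)) = N := by simp
  set p' : NNReal := Real.toNNReal (2 * N / (N - 2)) with hp'
  have hp'r : (p' : ℝ) = 2 * N / (N - 2) := by
    rw [hp', Real.coe_toNNReal _ (div_nonneg (by linarith) (by linarith))]
  have hpinv : (p' : ℝ)⁻¹ = 1 / 2 - 1 / N := by
    rw [hp'r]
    have : (N : ℝ) - 2 ≠ 0 := by linarith
    have : (N : ℝ) ≠ 0 := by linarith
    field_simp
  set c := eLpNormLESNormFDerivOfEqInnerConst (volume : Measure (EuclideanSpace ℝ (Fin N))) ((2 : NNReal) : ℝ) with hcdef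
  refine ⟨(c : ℝ) ^ 2 + 1, by positivity, fun φ hφ hφc S M hM hS => ?_⟩
  have h1 := eLpNorm_le_eLpNorm_fderiv_of_eq_inner (volume : Measure (EuclideanSpace ℝ (Fin N))) hφ hφc (p := 2) (p' := p')
    (by norm_num) (by rw [hfin]; omega) (by rw [hfin, hpinv]; norm_num)
  have h2 := eLpNorm_le_eLpNorm_mul_rpow_measure_univ (μ := volume.restrict S) (f := φ)
    (p := ((2 : NNReal) : ENNReal)) (q := (p' : ENNReal)) (by
      rw [ENNReal.coe_le_coe, ← NNReal.coe_le_coe, hp'r, le_div_iff₀ (by linarith)]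
      norm_num) hφ.continuous.aestronglyMeasurable
  have hexp : 1 / ((2 : NNReal) : ENNReal).toReal - 1 / (p' : ENNReal).toReal = 1 / N := by
    rw [ENNReal.coe_toReal, ENNReal.coe_toReal, one_div (p' : ℝ), hpinv]; norm_num
  rw [hexp, Measure.restrict_apply_univ] at h2
  have h3 := eLpNorm_restrict_le φ (p' : ENNReal) volume S
  have h4 : eLpNorm φ ((2 : NNReal) : ENNReal) (volume.restrict S) ≤
      (c * eLpNorm (fderiv ℝ φ) ((2 : NNReal) : ENNReal) volume) * ENNReal.ofReal M ^ (1 / (N : ℝ)) := by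
    refine h2.trans ?_
    gcongr
    exact h3.trans h1
  have h5 := pow_le_pow_left' h4 2
  have e1 := sq_eLp hφ.continuous hφc S
  have e2 := sq_eLp (hφ.continuous_fderiv (by norm_num)) (hφc.fderiv ℝ) univ
  rw [Measure.restrict_univ] at e2
  simp_rw [norm_fderiv_sq] at e2
  have e0 : ∫ x in S, ‖φ x‖ ^ 2 = ∫ x in S, φ x ^ 2 := by simp
  rw [e0] at e1
  have hI : 0 ≤ ∫ x, gsq φ x := integral_nonneg fun x => gsq_nonneg _ _
  rw [mul_pow, mul_pow, ← e1, ← e2, ENNReal.ofReal_rpow_of_nonneg hM (by positivity),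
    ← ENNReal.ofReal_pow (by positivity), ← Real.rpow_natCast, ← Real.rpow_mul hM] at h5
  have e3 : (c : ENNReal) ^ 2 = ENNReal.ofReal ((c : ℝ) ^ 2) := by
    rw [ENNReal.ofReal_pow c.coe_nonneg, ENNReal.ofReal_coe_nnreal]
  rw [e3, ← ENNReal.ofReal_mul (by positivity), ← ENNReal.ofReal_mul (by positivity),
    ENNReal.ofReal_le_ofReal_iff (by positivity)] at h5
  have e4 : 1 / (N : ℝ) * ((2 : ℕ) : ℝ) = 2 / N := by push_cast; ring
  rw [e4] at h5
  refine h5.trans ?_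
  have : 0 ≤ M ^ (2 / (N : ℝ)) := by positivity
  nlinarith [mul_nonneg hI this]
end

section
open MeasureTheory Metric Real Set Filter Topology

theorem core {N : ℕ} (hN : 3 ≤ N) {lam gam p θ : ℝ} (hp : 1 < p) (hpθ : p ≤ θ) (hlam : 0 < lam) (hgam : 0 < gam) :
    ∃ L C1 C : ℝ, 0 < L ∧ 0 < C1 ∧ 0 < C ∧ ∀ U V : EuclideanSpace ℝ (Fin N) → ℝ,
    CoreSol lam gam p θ U V → ∀ m > 0, ∫ x in ball 0 1, V x ^ 2 = m ^ 2 →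
      ∀ t > 0, ∀ τ > 0, τ ≤ 4/10 → ∫ x in ball 0 τ, V x ^ 2 ≤
        L * τ ^ N * m ^ 2 + C * (C1 * (t ^ ((p + 1) / (θ + 1) * θ - 1) + m / t)) ^ (2 / (N : ℝ)) * m ^ 2 := by
  obtain ⟨ζ, hζ, hζc, hζ0, hζ1, hζa, hζb, hζt⟩ := exists_cutoff N (a := 6/10) (b := 7/10) (by norm_num) (by norm_num)
  obtain ⟨C3, A, B, hC3, hA, hB, h3⟩ := step3 (N := N) hp hpθ hlam hgam hζ hζc hζ0 hζ1 hζb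
  obtain ⟨CS, hCS, hS⟩ := sobolev hN
  have hom := om_pos N
  have hc0 := c0_pos N
  set e := (p + 1) / (θ + 1) * θ with he
  have he1 : 1 < e := by
    rw [he, div_mul_eq_mul_div, lt_div_iff₀ (by linarith)]; nlinarith
  set L' := 4 * ((1/10 : ℝ) ^ N)⁻¹ * (1 + om N) + A * om N with hL'
  have hL'0 : 0 < L' := by positivity
  set L := (L' + 1) / c0 N with hL
  have hL0 : 0 < L := by positivity
  set C5 := B * (1 + om N) + C3 with hC5
  have hC50 : 0 < C5 := by positivity
  refine ⟨L ^ 2 * om N, om N * C5, CS * C3, by positivity, by positivity, by positivity,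
    fun U V h m hm hmV t ht τ hτ hτ4 => ?_⟩
  obtain ⟨hX, hG, hf⟩ := h3 U V h m hm hmV
  have hVc := h.hV.continuous
  have hUc := h.hU.continuous
  have hζcont := hζ.continuous
  have hlapc := lap_cont h.hV
  have hUp : Continuous fun x => U x ^ θ := hUc.rpow_const fun _ => Or.inr (by linarith)
  have hVp : Continuous fun x => V x ^ e := hVc.rpow_const fun _ => Or.inr (by linarith)
  set f0 : EuclideanSpace ℝ (Fin N) → ℝ := fun x => min (gam * U x ^ θ) (B * V x ^ e) with hf0
  have hf0c : Continuous f0 := by fun_prop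
  set f1 : EuclideanSpace ℝ (Fin N) → ℝ := (ball 0 (6/10)).indicator f0 with hf1
  have hf1m : Measurable f1 := hf0c.measurable.indicator measurableSet_ball
  have hf1n : ∀ y, 0 ≤ f1 y := by
    intro y
    refine indicator_nonneg (fun x hx => ?_) y
    have hx1 : x ∈ ball (0 : EuclideanSpace ℝ (Fin N)) 1 := ball_subset_ball (by norm_num) hx
    have := h.Upos x hx1
    have := h.Vpos x hx1
    simp only [hf0]
    apply le_min <;> positivity
  have hf1i : Integrable f1 := (integrable_indicator_iff measurableSet_ball).mpr (contInt hf0c _ _)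
  set T := t ^ (e - 1) + m / t with hT
  have hT0 : 0 < T := by positivity
  have hf1int : ∫ x, f1 x ≤ C5 * T * m := by
    have hi : IntegrableOn (fun x => B * t ^ (e - 1) * V x + (1 / t) * ((- lap V x) * V x * ζ x ^ 2))
      (ball (0 : EuclideanSpace ℝ (Fin N)) (6/10)) := contInt (by fun_prop) _ _
    have hpos : ∀ x ∈ ball (0 : EuclideanSpace ℝ (Fin N)) 1, 0 ≤ (- lap V x) * V x * ζ x ^ 2 := by
      intro x hx
      have := h.Upos x hx
      have := h.Vpos x hx
      rw [h.lapV x hx]; positivity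
    have h1 : ∫ x, f1 x ≤ ∫ x in ball 0 (6/10), (B * t ^ (e - 1) * V x + (1 / t) * ((- lap V x) * V x * ζ x ^ 2)) := by
      rw [hf1, integral_indicator measurableSet_ball]
      refine setIntegral_mono_on (contInt hf0c _ _) hi measurableSet_ball fun x hx => ?_
      have hx1 : x ∈ ball (0 : EuclideanSpace ℝ (Fin N)) 1 := ball_subset_ball (by norm_num) hx
      have hu := h.Upos x hx1
      have hv := h.Vpos x hx1
      rw [hζa x (ball_subset_closedBall hx), h.lapV x hx1]
      rcases le_total (V x) t with hc | hc
      · have a1 : V x ^ e = V x ^ (e - 1) * V x := by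
          rw [← Real.rpow_add_one hv.ne']; ring_nf
        have a2 : V x ^ (e - 1) ≤ t ^ (e - 1) := Real.rpow_le_rpow hv.le hc (by linarith)
        have a3 : f0 x ≤ B * (t ^ (e - 1) * V x) := by
          refine (min_le_right _ _).trans ?_
          rw [a1]; gcongr
        have : 0 ≤ 1 / t * (gam * U x ^ θ * V x * 1 ^ 2) := by positivity
        linarith
      · have a3 : f0 x ≤ 1 / t * (gam * U x ^ θ * V x * 1 ^ 2) := by
          refine (min_le_left _ _).trans ?_
          rw [one_div_mul_eq_div, le_div_iff₀ ht, one_pow, mul_one]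
          gcongr
        have : 0 ≤ B * t ^ (e - 1) * V x := by positivity
        linarith
    refine h1.trans ?_
    have hcX : Continuous fun x => (- lap V x) * V x * ζ x ^ 2 := by fun_prop
    rw [integral_add (contInt (by fun_prop) _ _) (contInt (by fun_prop) _ _), integral_const_mul,
      integral_const_mul]
    have h2 : ∫ x in ball 0 (6/10), V x ≤ (1 + om N) * m := by
      refine (setIntegral_mono_set (contInt hVc 0 1) ?_
        (ball_subset_ball (by norm_num)).eventuallyLE).trans (intV h hm hmV)
      exact (ae_restrict_iff' measurableSet_ball).mpr (Eventually.of_forall fun x hx => (h.Vpos x hx).le)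
    have h4 : ∫ x in ball 0 (6/10), (- lap V x) * V x * ζ x ^ 2 ≤ C3 * m ^ 2 := by
      refine le_trans ?_ hX
      refine setIntegral_le_integral (hcX.integrable_of_hasCompactSupport ?_) (Eventually.of_forall fun x => ?_)
      · refine HasCompactSupport.intro hζc fun x hx => ?_
        rw [image_eq_zero_of_notMem_tsupport hx]; simp
      · show 0 ≤ (- lap V x) * V x * ζ x ^ 2
        by_cases hx : x ∈ ball (0 : EuclideanSpace ℝ (Fin N)) 1
        · exact hpos x hx
        · rw [hζb x (by simp at hx; linarith)]; simp
    calc _ ≤ B * t ^ (e - 1) * ((1 + om N) * m) + 1 / t * (C3 * m ^ 2) := by gcongr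
      _ = (B * (1 + om N)) * t ^ (e - 1) * m + C3 * (m / t) * m := by field_simp
      _ ≤ C5 * t ^ (e - 1) * m + C5 * (m / t) * m := by
          have : B * (1 + om N) ≤ C5 := by rw [hC5]; linarith
          have : C3 ≤ C5 := by rw [hC5]; linarith [show 0 < B * (1 + om N) by positivity]
          gcongr
      _ = C5 * T * m := by rw [hT]; ring
  -- the exceptional set
  set E : Set (EuclideanSpace ℝ (Fin N)) := {x | L * m < V x} with hE
  have hEm : MeasurableSet E := measurableSet_lt measurable_const hVc.measurable
  have hsub : ball 0 (4/10) ∩ E ⊆ {x | ENNReal.ofReal m ≤ pot (1/10) f1 x} := by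
    rintro x ⟨hx, hxE⟩
    have hb : ball x (1/10) ⊆ ball 0 (6/10) := by
      apply ball_subset_ball'
      simp at hx ⊢; linarith
    have hb1 : ball x (1/10) ⊆ ball 0 1 := hb.trans (ball_subset_ball (by norm_num))
    have h1 := mv_super h.hV h.hVc x (R := 1/10) (by norm_num) (by norm_num) (A := A * m) (by positivity) hf1n
      (fun y hy => by
        rw [h.lapV y (hb1 hy)]
        have := hf y (ball_subset_ball (by norm_num) (hb hy))
        rw [hf1, indicator_of_mem (hb hy)]
        exact this)
    have h2 := mv_avg_le hVc x (R := 1/10) (by norm_num) (fun y hy => (h.Vpos y (hb1 hy)).le)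
    have h4 : ∫ y in ball x (1/10), V y ≤ (1 + om N) * m := by
      refine (setIntegral_mono_set (contInt hVc 0 1) ?_ hb1.eventuallyLE).trans (intV h hm hmV)
      exact (ae_restrict_iff' measurableSet_ball).mpr (Eventually.of_forall fun x hx => (h.Vpos x hx).le)
    have h5 : ∫ y, V (x + (1/10 : ℝ) • y) * eta y ≤ 4 * ((1/10 : ℝ) ^ N)⁻¹ * (1 + om N) * m := by
      refine h2.trans ?_
      calc _ ≤ 4 * ((1/10 : ℝ) ^ N)⁻¹ * ((1 + om N) * m) := by gcongr
        _ = _ := by ring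
    have hvol : volume (ball (0 : EuclideanSpace ℝ (Fin N)) 1) = ENNReal.ofReal (om N) := by
      rw [om, ofReal_measureReal measure_ball_lt_top.ne]
    have h6 : ENNReal.ofReal (L' * m) + ENNReal.ofReal m ≤ ENNReal.ofReal (L' * m) + pot (1/10) f1 x := by
      rw [← ENNReal.ofReal_add (by positivity) hm.le]
      calc ENNReal.ofReal (L' * m + m) ≤ ENNReal.ofReal (c0 N * V x) := by
            apply ENNReal.ofReal_le_ofReal
            have : L * m < V x := hxE
            have h7 := mul_lt_mul_of_pos_left this hc0
            have : c0 N * (L * m) = L' * m + m := by rw [hL]; field_simp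
            linarith
        _ ≤ _ := h1
        _ ≤ _ := by
            rw [hvol, ← ENNReal.ofReal_mul (by positivity)]
            gcongr
            refine (add_le_add_left (ENNReal.ofReal_le_ofReal h5) _).trans (le_of_eq ?_)
            rw [← ENNReal.ofReal_add (by positivity) (by positivity)]
            congr 1; rw [hL']; ring
    exact (ENNReal.add_le_add_iff_left ENNReal.ofReal_ne_top).mp h6
  have hvolE : volume (ball 0 (4/10) ∩ E) ≤ ENNReal.ofReal (om N * C5 * T) := by
    have hvol : volume (ball (0 : EuclideanSpace ℝ (Fin N)) 1) = ENNReal.ofReal (om N) := by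
      rw [om, ofReal_measureReal measure_ball_lt_top.ne]
    have h1 : ENNReal.ofReal m * volume (ball 0 (4/10) ∩ E) ≤ ENNReal.ofReal (om N * C5 * T * m) := by
      calc _ ≤ ENNReal.ofReal m * volume {x | ENNReal.ofReal m ≤ pot (1/10) f1 x} := by gcongr
        _ ≤ ∫⁻ x, pot (1/10) f1 x := mul_meas_ge_le_lintegral₀ (pot_meas _ hf1m).aemeasurable _
        _ ≤ _ := pot_int (by norm_num) hf1m
        _ = ENNReal.ofReal (om N) * ENNReal.ofReal (∫ x, f1 x) := by
            rw [hvol, ofReal_integral_eq_lintegral_ofReal hf1i (Eventually.of_forall hf1n)]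
        _ ≤ ENNReal.ofReal (om N) * ENNReal.ofReal (C5 * T * m) := by gcongr
        _ = _ := by
            rw [← ENNReal.ofReal_mul hom.le]; congr 1; ring
    rw [mul_comm (om N * C5 * T) m, ENNReal.ofReal_mul hm.le] at h1
    exact (ENNReal.mul_le_mul_iff_right (by simpa using hm) ENNReal.ofReal_ne_top).mp h1
  have hφC : ContDiff ℝ 1 fun y => V y * ζ y := (h.hV.mul hζ).of_le (by norm_num)
  have hφc : HasCompactSupport fun y => V y * ζ y := hζc.mul_left
  have hsob := hS _ hφC hφc _ (om N * C5 * T) (by positivity) hvolE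
  have hVE : ∫ x in ball 0 τ ∩ E, V x ^ 2 ≤ CS * C3 * (om N * C5 * T) ^ (2 / (N : ℝ)) * m ^ 2 := by
    have hsub2 : ball 0 τ ∩ E ⊆ ball 0 (4/10) ∩ E := inter_subset_inter_left _ (ball_subset_ball hτ4)
    have e1 : ∫ x in ball 0 τ ∩ E, V x ^ 2 = ∫ x in ball 0 τ ∩ E, (V x * ζ x) ^ 2 := by
      refine setIntegral_congr_fun (measurableSet_ball.inter hEm) fun x hx => ?_
      show V x ^ 2 = (V x * ζ x) ^ 2
      rw [hζa x (closedBall_subset_closedBall (by norm_num) (ball_subset_closedBall (hsub2 hx).1)), mul_one]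
    rw [e1]
    have hcont : Continuous fun x => (V x * ζ x) ^ 2 := by fun_prop
    refine (setIntegral_mono_set ((contInt hcont 0 (4/10)).mono_set inter_subset_left)
      (Eventually.of_forall fun x => sq_nonneg _) hsub2.eventuallyLE).trans (hsob.trans ?_)
    calc _ ≤ CS * (om N * C5 * T) ^ (2 / (N : ℝ)) * (C3 * m ^ 2) := by gcongr
      _ = _ := by ring
  have hVnE : ∫ x in ball 0 τ \ E, V x ^ 2 ≤ L ^ 2 * om N * τ ^ N * m ^ 2 := by
    have : ∫ x in ball 0 τ \ E, V x ^ 2 ≤ ∫ x in ball (0 : EuclideanSpace ℝ (Fin N)) τ \ E, (L * m) ^ 2 := by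
      refine setIntegral_mono_on ((contInt (hVc.pow 2) 0 τ).mono_set sdiff_subset)
        ((contInt continuous_const 0 τ).mono_set sdiff_subset) (measurableSet_ball.diff hEm) fun x hx => ?_
      have hv := h.Vpos x (ball_subset_ball (by linarith) hx.1)
      have : V x ≤ L * m := not_lt.mp hx.2
      show V x ^ 2 ≤ _
      gcongr
    refine this.trans ?_
    refine (setIntegral_mono_set (contInt continuous_const 0 τ)
      (Eventually.of_forall fun x => sq_nonneg _) sdiff_subset.eventuallyLE).trans ?_
    rw [setIntegral_const, smul_eq_mul]
    have : Nontrivial (EuclideanSpace ℝ (Fin N)) := by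
      have : Nonempty (Fin N) := ⟨⟨0, by omega⟩⟩
      infer_instance
    have e2 : volume.real (ball (0 : EuclideanSpace ℝ (Fin N)) τ) = τ ^ N * om N := by
      rw [measureReal_def, Measure.addHaar_ball _ _ hτ.le, ENNReal.toReal_mul, ENNReal.toReal_ofReal (by positivity)]
      simp [om, measureReal_def]
    rw [e2]; apply le_of_eq; ring
  rw [← integral_inter_add_sdiff hEm (contInt (f := fun x => V x ^ 2) (hVc.pow 2) 0 τ)]
  have : om N * C5 * T = om N * C5 * (t ^ (e - 1) + m / t) := by rw [hT]
  rw [← this]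
  linarith
end

section
open MeasureTheory Metric Real Set Filter Topology

theorem scale_set {N : ℕ} (f : EuclideanSpace ℝ (Fin N) → ℝ) (z : EuclideanSpace ℝ (Fin N)) {R ρ : ℝ} (hR : 0 < R) :
    ∫ x in ball z (ρ * R), f x = R ^ N * ∫ y in ball 0 ρ, f (z + R • y) := by
  have h := integral_affine ((ball z (ρ * R)).indicator f) z hR
  rw [integral_indicator measurableSet_ball] at h
  have e : (fun y => (ball z (ρ * R)).indicator f (z + R • y)) =
      (ball (0 : EuclideanSpace ℝ (Fin N)) ρ).indicator fun y => f (z + R • y) := by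
    ext y
    have : z + R • y ∈ ball z (ρ * R) ↔ y ∈ ball (0 : EuclideanSpace ℝ (Fin N)) ρ := by
      simp [dist_eq_norm, norm_smul, abs_of_pos hR, mul_comm R, mul_lt_mul_iff_left₀ hR]
    by_cases hy : y ∈ ball (0 : EuclideanSpace ℝ (Fin N)) ρ
    · rw [indicator_of_mem hy, indicator_of_mem (this.mpr hy)]
    · rw [indicator_of_notMem hy, indicator_of_notMem (fun h => hy (this.mp h))]
  rw [e, integral_indicator measurableSet_ball] at h
  rw [h]; field_simp

theorem rescale {N : ℕ} {lam gam p θ : ℝ} (hp : 1 < p) (hpθ : p ≤ θ)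
    {Ω : Set (EuclideanSpace ℝ (Fin N))} (hΩ : IsOpen Ω)
    {u v : EuclideanSpace ℝ (Fin N) → ℝ} (hsol : IsSolution Ω lam gam p θ u v) (hst : IsStable Ω lam gam p θ u v)
    {z : EuclideanSpace ℝ (Fin N)} {R : ℝ} (hR : 0 < R) (hball : closedBall z R ⊆ Ω) :
    ∃ U V : EuclideanSpace ℝ (Fin N) → ℝ, CoreSol lam gam p θ U V ∧
      ∀ x ∈ ball (0 : EuclideanSpace ℝ (Fin N)) 1, V x = R ^ (2 * (θ + 1) / (p * θ - 1)) * (v (z + R • x) + 1) := by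
  obtain ⟨hu, hv, upos, vpos, lu, lv⟩ := hsol
  have hpt : 0 < p * θ - 1 := by nlinarith
  set β := 2 * (θ + 1) / (p * θ - 1) with hβ
  set α := 2 * (p + 1) / (p * θ - 1) with hα
  have e1 : α + 2 = β * p := by rw [hα, hβ]; field_simp; ring
  have hk : (p * θ - 1) * (p * θ - 1)⁻¹ = 1 := mul_inv_cancel₀ hpt.ne'
  have e2 : β + 2 = α * θ := by rw [hα, hβ]; linear_combination (-2) * hk
  have e3 : β * ((p - 1) / 2) + α * ((θ - 1) / 2) = 2 := by rw [hα, hβ]; linear_combination 2 * hk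
  set T : EuclideanSpace ℝ (Fin N) → EuclideanSpace ℝ (Fin N) := fun x => z + R • x with hT
  have hTc : ContDiff ℝ 2 T := contDiff_const.add (contDiff_id.const_smul R)
  set Ω' := T ⁻¹' Ω with hΩ'
  have hΩ'o : IsOpen Ω' := hΩ.preimage hTc.continuous
  have hcb : closedBall (0 : EuclideanSpace ℝ (Fin N)) 1 ⊆ Ω' := by
    intro x hx
    apply hball
    simp [hT, dist_eq_norm, norm_smul, abs_of_pos hR] at hx ⊢
    nlinarith
  obtain ⟨ε, hε, hεs⟩ := (isCompact_closedBall (0 : EuclideanSpace ℝ (Fin N)) 1).exists_cthickening_subset_open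
    hΩ'o hcb
  rw [cthickening_closedBall hε.le zero_le_one] at hεs
  obtain ⟨χ, hχ, hχc, hχ0, hχ1, hχa, hχb, hχt⟩ := exists_cutoff N (a := 1) (b := ε + 1) one_pos (by linarith)
  have hin : ∀ x ∈ ball (0 : EuclideanSpace ℝ (Fin N)) 1, T x ∈ Ω := fun x hx => hcb (ball_subset_closedBall hx)
  -- generic facts
  have hC : ∀ (c : ℝ) (f : EuclideanSpace ℝ (Fin N) → ℝ), ContDiffOn ℝ 2 f Ω →
      ContDiff ℝ 2 fun x => χ x * (c * (f (T x) + 1)) := by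
    intro c f hf
    refine contDiff_cutoff hΩ'o hχ (hχt.trans hεs) ?_
    exact contDiffOn_const.mul ((hf.comp hTc.contDiffOn (fun x hx => hx)).add contDiffOn_const)
  have hval : ∀ (c : ℝ) (f : EuclideanSpace ℝ (Fin N) → ℝ), ∀ x ∈ ball (0 : EuclideanSpace ℝ (Fin N)) 1,
      χ x * (c * (f (T x) + 1)) = c * (f (T x) + 1) := fun c f x hx => by
    rw [hχa x (ball_subset_closedBall hx), one_mul]
  have hlap : ∀ (c : ℝ) (f : EuclideanSpace ℝ (Fin N) → ℝ), ContDiffOn ℝ 2 f Ω →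
      ∀ x ∈ ball (0 : EuclideanSpace ℝ (Fin N)) 1,
      lap (fun x => χ x * (c * (f (T x) + 1))) x = c * R ^ 2 * lap f (T x) := by
    intro c f hf x hx
    have : (fun x => χ x * (c * (f (T x) + 1))) =ᶠ[𝓝 x] fun x => c * (f (T x) + 1) := by
      filter_upwards [isOpen_ball.mem_nhds hx] with y hy using hval c f y hy
    rw [lap_congr this]
    exact lap_scale f z x 1 R c (hf.contDiffAt (hΩ.mem_nhds (hin x hx)))
  refine ⟨fun x => χ x * (R ^ α * (u (T x) + 1)), fun x => χ x * (R ^ β * (v (T x) + 1)),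
    ⟨hC _ _ hu, hχc.mul_right, hC _ _ hv, hχc.mul_right, ?_, ?_, ?_, ?_, ?_⟩, fun x hx => hval _ _ x hx⟩
  · intro x hx
    have := upos _ (hin x hx)
    rw [hval _ _ x hx]; positivity
  · intro x hx
    have := vpos _ (hin x hx)
    rw [hval _ _ x hx]; positivity
  · intro x hx
    have hvp := vpos _ (hin x hx)
    rw [hlap _ _ hu x hx, hval _ _ x hx, Real.mul_rpow (by positivity) (by positivity), ← Real.rpow_mul hR.le, ← e1,
      Real.rpow_add hR, Real.rpow_two]
    have := lu _ (hin x hx)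
    linear_combination (R ^ α * R ^ 2) * this
  · intro x hx
    have hvp := upos _ (hin x hx)
    rw [hlap _ _ hv x hx, hval _ _ x hx, Real.mul_rpow (by positivity) (by positivity), ← Real.rpow_mul hR.le, ← e2,
      Real.rpow_add hR, Real.rpow_two]
    have := lv _ (hin x hx)
    linear_combination (R ^ β * R ^ 2) * this
  · intro φ hφ
    obtain ⟨hφC, hφc, hφt⟩ := hφ
    set S : EuclideanSpace ℝ (Fin N) → EuclideanSpace ℝ (Fin N) := fun y => R⁻¹ • (y - z) with hS
    have hTS : ∀ y, T (S y) = y := fun y => by simp [hT, hS, smul_smul, hR.ne']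
    have hST : ∀ y, S (T y) = y := fun y => by simp [hT, hS, smul_smul, hR.ne']
    have hSc : Continuous S := by fun_prop
    set Φ : EuclideanSpace ℝ (Fin N) → ℝ := fun y => φ (S y) with hΦ
    have hΦC : ContDiff ℝ (⊤ : ℕ∞) Φ := by
      apply hφC.comp
      exact (contDiff_id.sub contDiff_const).const_smul R⁻¹
    have hts : tsupport Φ ⊆ T '' tsupport φ := by
      refine closure_minimal ?_ (hφc.isCompact.image hTc.continuous).isClosed
      intro y hy
      exact ⟨S y, subset_closure hy, hTS y⟩
    have htΩ : tsupport Φ ⊆ Ω := by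
      refine hts.trans ?_
      rintro _ ⟨x, hx, rfl⟩
      exact hin x (hφt hx)
    have hΦc : HasCompactSupport Φ :=
      HasCompactSupport.of_support_subset_isCompact (hφc.isCompact.image hTc.continuous)
        (subset_closure.trans hts)
    have hmain := hst Φ ⟨hΦC, hΦc, htΩ⟩
    have hgz : ∀ y ∉ Ω, gsq Φ y = 0 := by
      intro y hy
      have : Φ =ᶠ[𝓝 y] fun _ => 0 := by
        filter_upwards [(isClosed_tsupport Φ).isOpen_compl.mem_nhds (fun h => hy (htΩ h))] with a ha
        exact image_eq_zero_of_notMem_tsupport ha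
      unfold gsq
      refine Finset.sum_eq_zero fun i _ => ?_
      rw [pd_congr i this]; simp [pd]
    simp_rw [norm_gradient_sq] at hmain
    rw [setIntegral_eq_integral_of_forall_compl_eq_zero hgz,
      setIntegral_eq_integral_of_forall_compl_eq_zero (fun y hy => by
        rw [image_eq_zero_of_notMem_tsupport (f := Φ) (fun h => hy (htΩ h))]; simp)] at hmain
    have i1 := integral_affine (fun y => (v y + 1) ^ ((p - 1) / 2) * (u y + 1) ^ ((θ - 1) / 2) * Φ y ^ 2) z hR
    have i2 := integral_affine (gsq Φ) z hR
    have hΦT : ∀ x, Φ (z + R • x) = φ x := fun x => by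
      show φ (S (T x)) = φ x
      rw [hST]
    have j2 : ∀ x, gsq φ x = R ^ 2 * gsq Φ (z + R • x) := by
      intro x
      have hfun : φ = fun y => (1 : ℝ) * (Φ (z + R • y) + 0) := by
        ext y; rw [hΦT]; ring
      unfold gsq
      rw [Finset.mul_sum]
      refine Finset.sum_congr rfl fun i _ => ?_
      have := pd_scale Φ z x i 0 R 1 ((hΦC.differentiable (by norm_num)) _)
      rw [← hfun] at this
      rw [this]; ring
    have j1 : ∀ x, ((χ x * (R ^ β * (v (T x) + 1))) ^ ((p - 1) / 2) * (χ x * (R ^ α * (u (T x) + 1))) ^ ((θ - 1) / 2))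
        * φ x ^ 2 = R ^ 2 * ((v (z + R • x) + 1) ^ ((p - 1) / 2) * (u (z + R • x) + 1) ^ ((θ - 1) / 2) * Φ (z + R • x) ^ 2) := by
      intro x
      rw [hΦT]
      by_cases hx : x ∈ ball (0 : EuclideanSpace ℝ (Fin N)) 1
      · have hvp := vpos _ (hin x hx)
        have hup := upos _ (hin x hx)
        rw [hval _ _ x hx, hval _ _ x hx, Real.mul_rpow (by positivity) (by positivity),
          Real.mul_rpow (by positivity) (by positivity), ← Real.rpow_mul hR.le, ← Real.rpow_mul hR.le]
        have : R ^ 2 = R ^ (β * ((p - 1) / 2)) * R ^ (α * ((θ - 1) / 2)) := by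
          rw [← Real.rpow_add hR, e3, Real.rpow_two]
        rw [this]; simp only [hT]; ring
      · rw [image_eq_zero_of_notMem_tsupport (fun h => hx (hφt h))]; simp
    simp_rw [j1, j2, integral_const_mul]
    rw [i1, i2]
    have := mul_le_mul_of_nonneg_left hmain (show 0 ≤ R ^ 2 * (R ^ N)⁻¹ by positivity)
    calc _ = R ^ 2 * (R ^ N)⁻¹ * _ := by ring
      _ ≤ _ := this
      _ = _ := by ring
end

/-- ε-regularity decay estimate, with `β = 2(θ+1)/(pθ−1)`. -/
theorem stmt19 {N : ℕ} (hN : 3 ≤ N) (p θ lam gam : ℝ)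
    (hp : 1 < p) (hpθ : p ≤ θ) (hlam : 0 < lam) (hgam : 0 < gam) :
    ∃ ε₁ τ : ℝ, 0 < ε₁ ∧ 0 < τ ∧ τ < 1 ∧
      ∀ Ω : Set (EuclideanSpace ℝ (Fin N)), IsOpen Ω →
      ∀ u v : EuclideanSpace ℝ (Fin N) → ℝ,
        IsSolution Ω lam gam p θ u v → IsStable Ω lam gam p θ u v →
      ∀ (z : EuclideanSpace ℝ (Fin N)) (R₀ : ℝ), 0 < R₀ → closedBall z R₀ ⊆ Ω →
        R₀ ^ (2 * (2 * (θ + 1) / (p * θ - 1)) - (N : ℝ)) *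
            (∫ x in ball z R₀, (v x + 1) ^ 2) ≤ ε₁ →
        (τ * R₀) ^ (2 * (2 * (θ + 1) / (p * θ - 1)) - (N : ℝ)) *
            (∫ x in ball z (τ * R₀), (v x + 1) ^ 2)
          ≤ (R₀ ^ (2 * (2 * (θ + 1) / (p * θ - 1)) - (N : ℝ)) *
              ∫ x in ball z R₀, (v x + 1) ^ 2) / 2 := by
  obtain ⟨L, C1, C, hL, hC1, hC, hcore⟩ := core (N := N) hN hp hpθ hlam hgam
  have hN0 : (0 : ℝ) < N := by
    have : 0 < N := by omega
    exact_mod_cast this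
  have hpt : 0 < p * θ - 1 := by nlinarith
  set β := 2 * (θ + 1) / (p * θ - 1) with hβ
  have hβp : 0 < β := by
    have : 0 < θ + 1 := by linarith
    positivity
  obtain ⟨τ, hτ0, hτ4, hτL⟩ : ∃ τ : ℝ, 0 < τ ∧ τ ≤ 4 / 10 ∧ L * τ ^ (2 * β) ≤ 1 / 4 := by
    refine ⟨min (4 / 10) ((1 / (4 * L)) ^ (1 / (2 * β))), by positivity, min_le_left _ _, ?_⟩
    have h1 : (min (4 / 10) ((1 / (4 * L)) ^ (1 / (2 * β)))) ^ (2 * β) ≤ ((1 / (4 * L)) ^ (1 / (2 * β))) ^ (2 * β) :=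
      Real.rpow_le_rpow (by positivity) (min_le_right _ _) (by positivity)
    rw [← Real.rpow_mul (by positivity), one_div_mul_cancel (by positivity), Real.rpow_one] at h1
    calc _ ≤ L * (1 / (4 * L)) := mul_le_mul_of_nonneg_left h1 hL.le
      _ = 1 / 4 := by field_simp
  set e := (p + 1) / (θ + 1) * θ with he
  have he1 : 0 < e - 1 := by
    have h1 : 0 < θ + 1 := by linarith
    have h2 : e - 1 = (p * θ - 1) / (θ + 1) := by rw [he]; field_simp; ring
    rw [h2]; positivity
  have hA : 0 < C * τ ^ (2 * β - (N : ℝ)) := by positivity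
  obtain ⟨κ, hκ0, hκ⟩ : ∃ κ : ℝ, 0 < κ ∧ C * τ ^ (2 * β - (N : ℝ)) * (C1 * κ) ^ (2 / (N : ℝ)) = 1 / 4 := by
    refine ⟨(1 / (4 * (C * τ ^ (2 * β - (N : ℝ))))) ^ ((N : ℝ) / 2) / C1, by positivity, ?_⟩
    rw [mul_div_cancel₀ _ hC1.ne', ← Real.rpow_mul (by positivity),
      show (N : ℝ) / 2 * (2 / (N : ℝ)) = 1 by field_simp, Real.rpow_one]
    field_simp
  obtain ⟨t, ht0, ht⟩ : ∃ t : ℝ, 0 < t ∧ t ^ (e - 1) = κ / 2 := by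
    refine ⟨(κ / 2) ^ (1 / (e - 1)), by positivity, ?_⟩
    rw [← Real.rpow_mul (by positivity), one_div_mul_cancel he1.ne', Real.rpow_one]
  refine ⟨(t * (κ / 2)) ^ 2, τ, by positivity, hτ0, by linarith, ?_⟩
  intro Ω hΩ u v hsol hst z R hR hball hG
  obtain ⟨U, V, hUV, hV⟩ := rescale hp hpθ hΩ hsol hst hR hball
  rw [← hβ] at hV
  have hscale : ∀ ρ : ℝ, 0 < ρ → ρ ≤ 1 → (ρ * R) ^ (2 * β - (N : ℝ)) * (∫ x in ball z (ρ * R), (v x + 1) ^ 2)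
      = ρ ^ (2 * β - (N : ℝ)) * ∫ x in ball (0 : EuclideanSpace ℝ (Fin N)) ρ, V x ^ 2 := by
    intro ρ hρ hρ1
    rw [scale_set _ z hR]
    have h1 : ∫ x in ball (0 : EuclideanSpace ℝ (Fin N)) ρ, V x ^ 2
        = (R ^ β) ^ 2 * ∫ x in ball (0 : EuclideanSpace ℝ (Fin N)) ρ, (v (z + R • x) + 1) ^ 2 := by
      rw [← integral_const_mul]
      refine setIntegral_congr_fun measurableSet_ball fun x hx => ?_
      show V x ^ 2 = _
      rw [hV x (ball_subset_ball hρ1 hx)]; ring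
    have h2 : (R ^ β) ^ 2 = R ^ (2 * β - (N : ℝ)) * R ^ N := by
      rw [← Real.rpow_natCast R N, ← Real.rpow_add hR, ← Real.rpow_natCast (R ^ β) 2, ← Real.rpow_mul hR.le]
      congr 1; push_cast; ring
    rw [h1, h2, Real.mul_rpow hρ.le hR.le]; ring
  have hG1 := hscale 1 one_pos le_rfl
  rw [one_mul, Real.one_rpow, one_mul] at hG1
  rw [hG1] at hG ⊢
  rw [hscale τ hτ0 (by linarith)]
  have hpos : 0 < ∫ x in ball (0 : EuclideanSpace ℝ (Fin N)) 1, V x ^ 2 := by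
    have hcont : Continuous fun x => V x ^ 2 := hUV.hV.continuous.pow 2
    rw [setIntegral_pos_iff_support_of_nonneg_ae (Filter.Eventually.of_forall fun x => sq_nonneg _)
      (contInt hcont 0 1)]
    have : Function.support (fun x => V x ^ 2) ∩ ball (0 : EuclideanSpace ℝ (Fin N)) 1 = ball 0 1 := by
      refine inter_eq_right.mpr fun x hx => ?_
      exact (pow_pos (hUV.Vpos x hx) 2).ne'
    rw [this]
    exact measure_ball_pos _ _ one_pos
  obtain ⟨m, hm0, hm⟩ : ∃ m : ℝ, 0 < m ∧ ∫ x in ball (0 : EuclideanSpace ℝ (Fin N)) 1, V x ^ 2 = m ^ 2 :=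
    ⟨Real.sqrt _, Real.sqrt_pos.mpr hpos, (Real.sq_sqrt hpos.le).symm⟩
  have hmain := hcore U V hUV m hm0 hm t ht0 τ hτ0 hτ4
  rw [hm] at hG ⊢
  have hmt : m ≤ t * (κ / 2) := (sq_le_sq₀ hm0.le (by positivity)).mp hG
  rw [ht] at hmain
  have hmt2 : m / t ≤ κ / 2 := by
    rw [div_le_iff₀ ht0]; linarith
  have h3 : (C1 * (κ / 2 + m / t)) ^ (2 / (N : ℝ)) ≤ (C1 * κ) ^ (2 / (N : ℝ)) := by
    apply Real.rpow_le_rpow (by positivity) _ (by positivity)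
    apply mul_le_mul_of_nonneg_left _ hC1.le
    linarith
  have hττ : τ ^ (2 * β - (N : ℝ)) * τ ^ N = τ ^ (2 * β) := by
    rw [← Real.rpow_natCast τ N, ← Real.rpow_add hτ0]; congr 1; ring
  calc τ ^ (2 * β - (N : ℝ)) * ∫ x in ball (0 : EuclideanSpace ℝ (Fin N)) τ, V x ^ 2
      ≤ τ ^ (2 * β - (N : ℝ)) * (L * τ ^ N * m ^ 2 + C * (C1 * (κ / 2 + m / t)) ^ (2 / (N : ℝ)) * m ^ 2) :=
        mul_le_mul_of_nonneg_left hmain (by positivity)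
    _ ≤ τ ^ (2 * β - (N : ℝ)) * (L * τ ^ N * m ^ 2 + C * (C1 * κ) ^ (2 / (N : ℝ)) * m ^ 2) := by gcongr
    _ = (L * (τ ^ (2 * β - (N : ℝ)) * τ ^ N)) * m ^ 2
        + (C * τ ^ (2 * β - (N : ℝ)) * (C1 * κ) ^ (2 / (N : ℝ))) * m ^ 2 := by ring
    _ ≤ 1 / 4 * m ^ 2 + 1 / 4 * m ^ 2 := by
        rw [hττ, hκ]; gcongr
    _ = m ^ 2 / 2 := by ring
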